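/- arXiv:1105.2735 — 3 statements merged into one kernel-verified Lean document; each statement's English description precedes it below -/
import Mathlib

section
/- Let d, k ∈ ℕ, and define G_k^d : (ℝ^d × ℝ^d) \ {(x,x) : x ∈ ℝ^d} → ℝ by G_k^d(x,x') := ((−1)^{k+d/2+1} ‖x−x'‖^{2k−d})/((k−1)! (k−d/2)! 2^{2k−1} π^{d/2}) · (log‖x−x'‖ − β_{p,d}) if d is even and k ≥ d/2 (with p = k − d/2), and G_k^d(x,x') := (Γ(d/2−k) ‖x−x'‖^{2k−d})/((k−1)! 2^{2k} π^{d/2}) otherwise, where β_{p,d} := (1/2)[H_p + H_{d/2+p−1} − H_{d/2−1}] and H_j := Σ_{i=1}^j 1/i is the j-th harmonic number. Then G_k^d is a fundamental solution for (−Δ)^k on ℝ^d: for every x' ∈ ℝ^d and every smooth compactly supported function φ : ℝ^d → ℝ, ∫_{ℝ^d} G_k^d(x,x') ((−Δ)^k φ)(x) dx = φ(x'), where Δφ := Σ_{i=1}^d ∂²φ/∂x_i² and (−Δ)^k denotes the k-fold iterate of −Δ. -/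
open scoped BigOperators

/-- The `j`-th harmonic number `H_j = ∑_{i=1}^j 1/i`. -/
noncomputable def harmonicNum (j : ℕ) : ℝ := ∑ i ∈ Finset.range j, (1 : ℝ) / (i + 1)

/-- `β_{p,d} = (1/2)[H_p + H_{d/2+p-1} - H_{d/2-1}]`. -/
noncomputable def betaConst (p d : ℕ) : ℝ :=
  (1 / 2) * (harmonicNum p + harmonicNum (d / 2 + p - 1) - harmonicNum (d / 2 - 1))

/-- The Laplacian `Δf = ∑_{i=1}^d ∂²f/∂x_i²` on `ℝ^d`. -/
noncomputable def laplacian {d : ℕ} (f : EuclideanSpace ℝ (Fin d) → ℝ)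
    (x : EuclideanSpace ℝ (Fin d)) : ℝ :=
  ∑ i : Fin d,
    fderiv ℝ (fun y => fderiv ℝ f y (EuclideanSpace.single i 1)) x (EuclideanSpace.single i 1)

/-- The `k`-fold iterate of `-Δ`. -/
noncomputable def negLapIter {d : ℕ} (k : ℕ) (f : EuclideanSpace ℝ (Fin d) → ℝ) :
    EuclideanSpace ℝ (Fin d) → ℝ :=
  (fun g : EuclideanSpace ℝ (Fin d) → ℝ => fun x => -(laplacian g x))^[k] f

/-- A power-law / logarithmic fundamental solution `G_k^d` of the polyharmonic equation. -/
noncomputable def polyharmonicG (d k : ℕ) (x x' : EuclideanSpace ℝ (Fin d)) : ℝ :=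
  if Even d ∧ d / 2 ≤ k then
    (-1 : ℝ) ^ (k + d / 2 + 1) * ‖x - x'‖ ^ (2 * (k : ℝ) - (d : ℝ)) /
        ((Nat.factorial (k - 1) : ℝ) * (Nat.factorial (k - d / 2) : ℝ) * 2 ^ (2 * k - 1) *
          Real.pi ^ (d / 2)) *
      (Real.log ‖x - x'‖ - betaConst (k - d / 2) d)
  else
    Real.Gamma ((d : ℝ) / 2 - (k : ℝ)) * ‖x - x'‖ ^ (2 * (k : ℝ) - (d : ℝ)) /
      ((Nat.factorial (k - 1) : ℝ) * 2 ^ (2 * k) * Real.pi ^ ((d : ℝ) / 2))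

/-!
As a function of `s = ‖x - x'‖ ^ 2`, the kernel has the form `f s = s ^ a * (A * log s + B)`.
Replacing `‖x‖ ^ 2` by `‖x‖ ^ 2 + ε` makes it smooth, so one Laplacian can be moved onto it:
at `s = ‖x‖ ^ 2 + ε`,

  `Δ (f (‖x‖ ^ 2 + ε)) = (2 * d * f' s + 4 * s * f'' s) - 4 * ε * f'' s`.

For `k ≥ 2` the error term `ε * f''` vanishes in the limit by dominated convergence, and the main
term turns the profile of order `k` into that of order `k - 1`, through the functional equation of
`Γ` or the recursion of the factorials and harmonic numbers; at `2 * k = d` the logarithm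
differentiates to a pure power. For `k = 1` the derivative `f'` is a multiple of
`s ^ (-d / 2)`: the main term is zero, and the error term is an approximate identity whose mass is
computed from the volume of the unit ball.
-/

namespace Polyharmonic

open Filter Topology Set MeasureTheory Asymptotics Module Metric

section OneVariable

lemma contDiffOn_succ_of_hasDerivAt {n : ℕ} {f f' : ℝ → ℝ} {U : Set ℝ} (hU : IsOpen U)
    (hf : ∀ s ∈ U, HasDerivAt f (f' s) s) (hf' : ContDiffOn ℝ n f' U) :
    ContDiffOn ℝ (n + 1) f U :=
  (contDiffOn_succ_iff_deriv_of_isOpen hU).2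
    ⟨fun s hs => (hf s hs).differentiableAt.differentiableWithinAt, by simp,
      hf'.congr fun s hs => (hf s hs).deriv⟩

lemma exists_abs_le_mul_rpow {f : ℝ → ℝ} {b : ℝ} (hf : ContinuousOn f (Ioi 0))
    (hO : f =O[𝓝[>] 0] (· ^ b)) (R : ℝ) : ∃ C ≥ 0, ∀ s ∈ Ioc 0 R, |f s| ≤ C * s ^ b := by
  obtain ⟨C₁, hC₁, hO⟩ := hO.exists_pos
  obtain ⟨δ, hδ, hnear⟩ := mem_nhdsGT_iff_exists_Ioo_subset.1 hO.bound
  have hquot : ContinuousOn (fun s => |f s| / s ^ b) (Icc δ R) := by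
    have hsub : Icc δ R ⊆ Ioi 0 := fun s hs => hδ.trans_le hs.1
    exact (hf.mono hsub).abs.div
      (continuousOn_id.rpow_const fun s hs => .inl (hsub hs).ne')
      fun s hs => (Real.rpow_pos_of_pos (hsub hs) b).ne'
  obtain ⟨C₂, hfar⟩ := isCompact_Icc.bddAbove_image hquot
  refine ⟨max C₁ C₂, hC₁.le.trans (le_max_left _ _), fun s hs => ?_⟩
  have hsb : 0 < s ^ b := Real.rpow_pos_of_pos hs.1 b
  rcases lt_or_ge s δ with hsδ | hsδ
  · calc |f s| ≤ C₁ * ‖s ^ b‖ := hnear ⟨hs.1, hsδ⟩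
      _ ≤ max C₁ C₂ * s ^ b := by
        rw [Real.norm_of_nonneg hsb.le]
        gcongr
        exact le_max_left _ _
  · rw [← div_le_iff₀ hsb]
    exact (hfar (mem_image_of_mem _ ⟨hsδ, hs.2⟩)).trans (le_max_right _ _)

lemma exists_abs_comp_add_le_mul_rpow {f : ℝ → ℝ} {b : ℝ} (hf : ContinuousOn f (Ioi 0))
    (hO : f =O[𝓝[>] 0] (· ^ b)) (hb : b ≤ 0) (R : ℝ) :
    ∃ C, ∀ ε ∈ Ioc (0 : ℝ) 1, ∀ r ∈ Ioc 0 R, |f (r + ε)| ≤ C * r ^ b := by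
  obtain ⟨C, hC₀, hC⟩ := exists_abs_le_mul_rpow hf hO (R + 1)
  refine ⟨C, fun ε hε r hr => ?_⟩
  calc |f (r + ε)| ≤ C * (r + ε) ^ b := hC _ ⟨add_pos hr.1 hε.1, add_le_add hr.2 hε.2⟩
    _ ≤ C * r ^ b := by
      gcongr C * ?_
      exact Real.rpow_le_rpow_of_nonpos hr.1 (by linarith [hε.1]) hb

lemma tendsto_comp_add_nhdsGT_zero {f : ℝ → ℝ} (hf : ContinuousOn f (Ioi 0)) {r : ℝ}
    (hr : 0 < r) : Tendsto (fun ε => f (r + ε)) (𝓝[>] 0) (𝓝 (f r)) := by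
  have hadd : Tendsto (fun ε => r + ε) (𝓝[>] 0) (𝓝 r) :=
    ((continuous_const_add r).tendsto' 0 r (add_zero r)).mono_left nhdsWithin_le_nhds
  exact (hf.continuousAt (Ioi_mem_nhds hr)).tendsto.comp hadd

lemma hasDerivAt_pow_mul_one_add_sq_rpow (n : ℕ) (y : ℝ) :
    HasDerivAt (fun y : ℝ => y ^ n * (1 + y ^ 2) ^ (-(n : ℝ) / 2))
      (n * (y ^ (n - 1) * (1 + y ^ 2) ^ (-(n : ℝ) / 2 - 1))) y := by
  have hpos : 0 < 1 + y ^ 2 := by positivity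
  have hbase : HasDerivAt (fun y : ℝ => 1 + y ^ 2) (2 * y) y := by
    simpa using (hasDerivAt_pow 2 y).const_add 1
  refine ((hasDerivAt_pow n y).mul
    (hbase.rpow_const (p := -(n : ℝ) / 2) (Or.inl hpos.ne'))).congr_deriv ?_
  have hsplit : (1 + y ^ 2) ^ (-(n : ℝ) / 2) = (1 + y ^ 2) ^ (-(n : ℝ) / 2 - 1) * (1 + y ^ 2) := by
    rw [← Real.rpow_add_one hpos.ne', sub_add_cancel]
  rw [hsplit]
  cases n with
  | zero => simp
  | succ n => rw [Nat.add_sub_cancel]; ring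

lemma tendsto_pow_mul_one_add_sq_rpow (n : ℕ) :
    Tendsto (fun y : ℝ => y ^ n * (1 + y ^ 2) ^ (-(n : ℝ) / 2)) atTop (𝓝 1) := by
  have hlim : Tendsto (fun y : ℝ => ((y ^ 2)⁻¹ + 1) ^ (-(n : ℝ) / 2)) atTop (𝓝 1) := by
    have hinv : Tendsto (fun y : ℝ => (y ^ 2)⁻¹) atTop (𝓝 0) :=
      tendsto_inv_atTop_zero.comp (tendsto_pow_atTop two_ne_zero)
    simpa using (hinv.add_const 1).rpow_const (p := -(n : ℝ) / 2) (Or.inl (by norm_num))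
  refine hlim.congr' ?_
  filter_upwards [eventually_gt_atTop 0] with y hy
  have hfactor : (y ^ 2)⁻¹ + 1 = (y ^ 2)⁻¹ * (1 + y ^ 2) := by field_simp
  have hpow : (y ^ 2)⁻¹ ^ (-(n : ℝ) / 2) = y ^ n := by
    rw [← Real.rpow_natCast y 2, ← Real.rpow_neg hy.le, ← Real.rpow_mul hy.le,
      ← Real.rpow_natCast]
    congr 1
    push_cast
    ring
  rw [hfactor, Real.mul_rpow (by positivity) (by positivity), hpow]

lemma tendsto_pow_mul_one_add_sq_rpow_sub_one (n : ℕ) :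
    Tendsto (fun y : ℝ => y ^ n * (1 + y ^ 2) ^ (-(n : ℝ) / 2 - 1)) atTop (𝓝 0) := by
  have hinv : Tendsto (fun y : ℝ => (1 + y ^ 2)⁻¹) atTop (𝓝 0) :=
    tendsto_inv_atTop_zero.comp
      (tendsto_const_nhds.add_atTop (tendsto_pow_atTop two_ne_zero))
  have hprod := (tendsto_pow_mul_one_add_sq_rpow n).mul hinv
  rw [mul_zero] at hprod
  refine hprod.congr fun y => ?_
  rw [Real.rpow_sub_one (by positivity)]
  ring

end OneVariable

section HaarMeasure

lemma continuous_comp_norm_sq_add {E : Type*} [SeminormedAddCommGroup E] {f : ℝ → ℝ}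
    (hf : ContinuousOn f (Ioi 0)) {ε : ℝ} (hε : 0 < ε) : Continuous fun x : E => f (‖x‖ ^ 2 + ε) :=
  hf.comp_continuous (by fun_prop) fun x => by
    rw [mem_Ioi]
    positivity

lemma rpow_neg_half_pow_mul_one_add_norm_smul_sq_rpow {E : Type*} [SeminormedAddCommGroup E]
    [NormedSpace ℝ E] {ε : ℝ} (hε : 0 < ε) (n : ℕ) (x : E) :
    (ε ^ (-(1 / 2) : ℝ)) ^ n * (1 + ‖ε ^ (-(1 / 2) : ℝ) • x‖ ^ 2) ^ (-(n : ℝ) / 2 - 1) =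
      ε * (‖x‖ ^ 2 + ε) ^ (-(n : ℝ) / 2 - 1) := by
  have hsq : (ε ^ (-(1 / 2) : ℝ)) ^ 2 = ε⁻¹ := by
    rw [← Real.rpow_mul_natCast hε.le, ← Real.rpow_neg_one]
    norm_num
  have hbase : 1 + ‖ε ^ (-(1 / 2) : ℝ) • x‖ ^ 2 = ε⁻¹ * (‖x‖ ^ 2 + ε) := by
    rw [norm_smul, mul_pow, Real.norm_of_nonneg (by positivity), hsq]
    field_simp
    ring
  have hscale : (ε ^ (-(1 / 2) : ℝ)) ^ n * ε⁻¹ ^ (-(n : ℝ) / 2 - 1) = ε := by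
    rw [← Real.rpow_mul_natCast hε.le, ← Real.rpow_neg_one, ← Real.rpow_mul hε.le,
      ← Real.rpow_add hε]
    ring_nf
    exact Real.rpow_one ε
  rw [hbase, Real.mul_rpow (by positivity) (by positivity), ← mul_assoc, hscale]

variable {E : Type*} [NormedAddCommGroup E] [NormedSpace ℝ E] [FiniteDimensional ℝ E]
  [MeasurableSpace E] [BorelSpace E] {μ : Measure E} [μ.IsAddHaarMeasure]

lemma integral_mul_fderiv_eq_neg_of_hasCompactSupport {u ψ : E → ℝ} (hu : ContDiff ℝ 1 u)
    (hψ : ContDiff ℝ 1 ψ) (hψs : HasCompactSupport ψ) (v : E) :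
    ∫ x, u x * fderiv ℝ ψ x v ∂μ = -∫ x, fderiv ℝ u x v * ψ x ∂μ := by
  have hu' : Continuous fun x => fderiv ℝ u x v := by fun_prop (disch := norm_num)
  have hψ' : Continuous fun x => fderiv ℝ ψ x v := by fun_prop (disch := norm_num)
  exact integral_mul_fderiv_eq_neg_fderiv_mul_of_integrable
    ((hu'.mul hψ.continuous).integrable_of_hasCompactSupport hψs.mul_left)
    ((hu.continuous.mul hψ').integrable_of_hasCompactSupport (hψs.fderiv_apply ℝ v).mul_left)
    ((hu.continuous.mul hψ.continuous).integrable_of_hasCompactSupport hψs.mul_left)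
    (fun x _ => hu.differentiable one_ne_zero x) (fun x _ => hψ.differentiable one_ne_zero x)

variable [Nontrivial E]

lemma tendsto_integral_mul_of_norm_le_rpow {ι : Type*} {l : Filter ι} [l.IsCountablyGenerated]
    {K : ι → E → ℝ} {K₀ ψ : E → ℝ} {C b : ℝ} (hb : -(finrank ℝ E : ℝ) < b)
    (hψ : Continuous ψ) (hψs : HasCompactSupport ψ)
    (hK : ∀ᶠ i in l, AEStronglyMeasurable (K i) μ)
    (hbound : ∀ᶠ i in l, ∀ x ∈ tsupport ψ, x ≠ 0 → ‖K i x‖ ≤ C * ‖x‖ ^ b)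
    (hlim : ∀ x ≠ 0, Tendsto (K · x) l (𝓝 (K₀ x))) :
    Tendsto (fun i => ∫ x, K i x * ψ x ∂μ) l (𝓝 (∫ x, K₀ x * ψ x ∂μ)) := by
  have hne : ∀ᵐ x ∂μ, x ≠ 0 := Measure.ae_ne μ 0
  have hdom : LocallyIntegrable (fun x => C * ‖x‖ ^ b) μ := by
    refine locallyIntegrable_of_norm_le_rpow (C := |C|) (α := -b) finrank_pos (by linarith)
      (.of_forall fun x => ?_) (Measurable.aestronglyMeasurable (by fun_prop))
    rw [norm_mul, neg_neg, Real.norm_of_nonneg (Real.rpow_nonneg (norm_nonneg x) b),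
      Real.norm_eq_abs]
  refine tendsto_integral_filter_of_dominated_convergence _ (hK.mono fun i hi => ?_) ?_
    (hdom.integrable_smul_right_of_hasCompactSupport hψ hψs).norm ?_
  · exact hi.mul hψ.aestronglyMeasurable
  · filter_upwards [hbound] with i hi
    filter_upwards [hne] with x hx
    by_cases hxψ : x ∈ tsupport ψ
    · rw [norm_mul, norm_smul]
      gcongr
      exact (hi x hxψ hx).trans (le_abs_self _)
    · simp [image_eq_zero_of_notMem_tsupport hxψ]
  · filter_upwards [hne] with x hx
    exact (hlim x hx).mul_const _

variable {b : ℝ} {ψ : E → ℝ}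

lemma tendsto_integral_comp_norm_sq_add {f : ℝ → ℝ} (hf : ContinuousOn f (Ioi 0))
    (hO : f =O[𝓝[>] 0] (· ^ b)) (hb : -(finrank ℝ E : ℝ) / 2 < b) (hb₀ : b ≤ 0)
    (hψ : Continuous ψ) (hψs : HasCompactSupport ψ) :
    Tendsto (fun ε => ∫ x, f (‖x‖ ^ 2 + ε) * ψ x ∂μ) (𝓝[>] 0)
      (𝓝 (∫ x, f (‖x‖ ^ 2) * ψ x ∂μ)) := by
  obtain ⟨R, hR⟩ := hψs.isBounded.exists_norm_le
  obtain ⟨C, hC⟩ := exists_abs_comp_add_le_mul_rpow hf hO hb₀ (R ^ 2)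
  refine tendsto_integral_mul_of_norm_le_rpow (C := C) (b := 2 * b) (by linarith) hψ hψs ?_ ?_
    fun x hx => tendsto_comp_add_nhdsGT_zero hf (by positivity)
  · filter_upwards [self_mem_nhdsWithin] with ε hε
    exact (continuous_comp_norm_sq_add hf hε).aestronglyMeasurable
  · filter_upwards [Ioc_mem_nhdsGT one_pos] with ε hε x hxψ hx
    rw [Real.rpow_mul (norm_nonneg x), Real.rpow_two]
    exact hC ε hε _ ⟨by positivity, by gcongr; exact hR x hxψ⟩

lemma tendsto_integral_mul_comp_norm_sq_add_zero {g : ℝ → ℝ} (hg : ContinuousOn g (Ioi 0))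
    (hO : (fun s => s * g s) =O[𝓝[>] 0] (· ^ b)) (hb : -(finrank ℝ E : ℝ) / 2 < b) (hb₀ : b ≤ 0)
    (hψ : Continuous ψ) (hψs : HasCompactSupport ψ) :
    Tendsto (fun ε => ∫ x, ε * g (‖x‖ ^ 2 + ε) * ψ x ∂μ) (𝓝[>] 0) (𝓝 0) := by
  obtain ⟨R, hR⟩ := hψs.isBounded.exists_norm_le
  obtain ⟨C, hC⟩ := exists_abs_comp_add_le_mul_rpow (continuousOn_id.mul hg) hO hb₀ (R ^ 2)
  have hmain := tendsto_integral_mul_of_norm_le_rpow (μ := μ) (l := 𝓝[>] (0 : ℝ))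
    (K := fun ε x => ε * g (‖x‖ ^ 2 + ε)) (K₀ := 0) (C := C) (b := 2 * b) (by linarith) hψ hψs
    ?_ ?_ fun x hx => ?_
  · simpa using hmain
  · filter_upwards [self_mem_nhdsWithin] with ε hε
    exact (continuous_const.mul (continuous_comp_norm_sq_add hg hε)).aestronglyMeasurable
  · filter_upwards [Ioc_mem_nhdsGT one_pos] with ε hε x hxψ hx
    have hε₀ : 0 < ε := hε.1
    calc ‖ε * g (‖x‖ ^ 2 + ε)‖ ≤ ‖(‖x‖ ^ 2 + ε) * g (‖x‖ ^ 2 + ε)‖ := by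
          rw [norm_mul, norm_mul, Real.norm_of_nonneg hε₀.le,
            Real.norm_of_nonneg (by positivity : (0 : ℝ) ≤ ‖x‖ ^ 2 + ε)]
          gcongr
          exact le_add_of_nonneg_left (sq_nonneg _)
      _ ≤ C * ‖x‖ ^ (2 * b) := by
          rw [Real.rpow_mul (norm_nonneg x), Real.rpow_two]
          exact hC ε hε _ ⟨by positivity, by gcongr; exact hR x hxψ⟩
  · have hid : Tendsto (fun ε : ℝ => ε) (𝓝[>] 0) (𝓝 0) := nhdsWithin_le_nhds
    simpa using hid.mul (tendsto_comp_add_nhdsGT_zero hg (r := ‖x‖ ^ 2) (by positivity))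

lemma integral_one_add_norm_sq_rpow :
    ∫ y : E, (1 + ‖y‖ ^ 2) ^ (-(finrank ℝ E : ℝ) / 2 - 1) ∂μ = μ.real (ball 0 1) := by
  have hradial := integral_Ioi_of_hasDerivAt_of_nonneg'
    (fun y (_ : y ∈ Ici 0) => hasDerivAt_pow_mul_one_add_sq_rpow (finrank ℝ E) y)
    (fun y (hy : 0 < y) => by positivity) (tendsto_pow_mul_one_add_sq_rpow _)
  rw [integral_const_mul, zero_pow finrank_pos.ne', zero_mul, sub_zero] at hradial
  rw [integral_fun_norm_addHaar μ fun r => (1 + r ^ 2) ^ (-(finrank ℝ E : ℝ) / 2 - 1)]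
  simp only [nsmul_eq_mul, smul_eq_mul]
  linear_combination μ.real (ball 0 1) * hradial

-- The substitution `c = ε ^ (-1 / 2)` turns the kernel into `c ^ n * Φ (c • x)` for a fixed `Φ`.
lemma tendsto_integral_mul_norm_sq_add_rpow (hψ : Integrable ψ μ) (hψ₀ : ContinuousAt ψ 0) :
    Tendsto (fun ε => ∫ x, ε * (‖x‖ ^ 2 + ε) ^ (-(finrank ℝ E : ℝ) / 2 - 1) * ψ x ∂μ) (𝓝[>] 0)
      (𝓝 (μ.real (ball 0 1) * ψ 0)) := by
  set n := finrank ℝ E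
  set V := μ.real (ball (0 : E) 1)
  have hV : 0 < V :=
    ENNReal.toReal_pos (measure_ball_pos μ 0 one_pos).ne' measure_ball_lt_top.ne
  set Φ : E → ℝ := fun x => V⁻¹ * (1 + ‖x‖ ^ 2) ^ (-(n : ℝ) / 2 - 1) with hΦ
  have hΦ_integral : ∫ x, Φ x ∂μ = 1 := by
    rw [integral_const_mul, integral_one_add_norm_sq_rpow, inv_mul_cancel₀ hV.ne']
  have hΦ_decay : Tendsto (fun x => ‖x‖ ^ n * Φ x) (Bornology.cobounded E) (𝓝 0) := by
    have hlim := ((tendsto_pow_mul_one_add_sq_rpow_sub_one n).comp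
      (tendsto_norm_cobounded_atTop (E := E))).const_mul V⁻¹
    rw [mul_zero] at hlim
    exact hlim.congr fun x => mul_left_comm _ _ _
  have hpeak := (tendsto_integral_comp_smul_smul_of_integrable (fun x => by positivity)
    hΦ_integral hΦ_decay hψ hψ₀).comp (tendsto_rpow_neg_nhdsGT_zero (y := -(1 / 2)) (by norm_num))
  refine (hpeak.const_mul V).congr' ?_
  filter_upwards [self_mem_nhdsWithin] with ε hε
  rw [Function.comp_apply, ← integral_const_mul]
  congr with x
  rw [← rpow_neg_half_pow_mul_one_add_norm_smul_sq_rpow hε, hΦ, smul_eq_mul]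
  field_simp
  exact mul_comm _ _

end HaarMeasure

section Laplacian

variable {d : ℕ}

lemma contDiff_laplacian {m n : WithTop ℕ∞} {f : EuclideanSpace ℝ (Fin d) → ℝ}
    (hf : ContDiff ℝ n f) (hmn : m + 2 ≤ n) : ContDiff ℝ m (laplacian f) := by
  have hsucc : m + 1 + 1 ≤ n := by rwa [add_assoc, one_add_one_eq_two]
  exact ContDiff.sum fun i _ =>
    (((hf.fderiv_right hsucc).clm_apply contDiff_const).fderiv_right le_rfl).clm_apply
      contDiff_const

lemma hasCompactSupport_laplacian {f : EuclideanSpace ℝ (Fin d) → ℝ} (hf : HasCompactSupport f) :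
    HasCompactSupport (laplacian f) := by
  refine HasCompactSupport.intro hf fun x hx => Finset.sum_eq_zero fun i _ => ?_
  have hsub := (tsupport_fderiv_apply_subset ℝ (EuclideanSpace.single i (1 : ℝ))).trans
    (tsupport_fderiv_apply_subset ℝ (f := f) (EuclideanSpace.single i (1 : ℝ)))
  exact image_eq_zero_of_notMem_tsupport
    (f := fun y => fderiv ℝ (fun z => fderiv ℝ f z _) y _) fun hi => hx (hsub hi)

lemma laplacian_comp_add_right (f : EuclideanSpace ℝ (Fin d) → ℝ)
    (c : EuclideanSpace ℝ (Fin d)) :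
    laplacian (fun y => f (y + c)) = fun x => laplacian f (x + c) := by
  ext x
  refine Finset.sum_congr rfl fun i _ => ?_
  simp only [fderiv_comp_add_right]
  rw [fderiv_comp_add_right (f := fun y => fderiv ℝ f y (EuclideanSpace.single i 1))]

lemma integral_mul_laplacian_comm {u ψ : EuclideanSpace ℝ (Fin d) → ℝ} (hu : ContDiff ℝ 2 u)
    (hψ : ContDiff ℝ 2 ψ) (hψs : HasCompactSupport ψ) :
    ∫ x, u x * laplacian ψ x = ∫ x, laplacian u x * ψ x := by
  have contDiff_one {w : EuclideanSpace ℝ (Fin d) → ℝ} (hw : ContDiff ℝ 2 w)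
      (v : EuclideanSpace ℝ (Fin d)) : ContDiff ℝ 1 fun x => fderiv ℝ w x v :=
    (hw.fderiv_right (by norm_num)).clm_apply contDiff_const
  have continuous_second {w : EuclideanSpace ℝ (Fin d) → ℝ} (hw : ContDiff ℝ 2 w)
      (v : EuclideanSpace ℝ (Fin d)) :
      Continuous fun x => fderiv ℝ (fun y => fderiv ℝ w y v) x v :=
    ((contDiff_one hw v).continuous_fderiv one_ne_zero).clm_apply continuous_const
  simp only [laplacian, Finset.mul_sum, Finset.sum_mul]
  rw [integral_finsetSum, integral_finsetSum]
  · refine Finset.sum_congr rfl fun i _ => ?_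
    rw [integral_mul_fderiv_eq_neg_of_hasCompactSupport (hu.of_le one_le_two) (contDiff_one hψ _)
        (hψs.fderiv_apply ℝ _),
      integral_mul_fderiv_eq_neg_of_hasCompactSupport (contDiff_one hu _) (hψ.of_le one_le_two)
        hψs, neg_neg]
  · exact fun i _ => ((continuous_second hu _).mul
      hψ.continuous).integrable_of_hasCompactSupport hψs.mul_left
  · exact fun i _ => (hu.continuous.mul (continuous_second hψ _)).integrable_of_hasCompactSupport
      ((hψs.fderiv_apply ℝ _).fderiv_apply ℝ _).mul_left

lemma fderiv_comp_norm_sq_single {f : ℝ → ℝ} {f' : ℝ} {x : EuclideanSpace ℝ (Fin d)}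
    (hf : HasDerivAt f f' (‖x‖ ^ 2)) (i : Fin d) :
    fderiv ℝ (fun y => f (‖y‖ ^ 2)) x (EuclideanSpace.single i 1) = 2 * (f' * x i) := by
  have hcomp := hf.comp_hasFDerivAt x (hasStrictFDerivAt_norm_sq x).hasFDerivAt
  rw [show (fun y => f (‖y‖ ^ 2)) = f ∘ fun y : EuclideanSpace ℝ (Fin d) => ‖y‖ ^ 2 from rfl,
    hcomp.fderiv]
  simp [EuclideanSpace.inner_single_right, mul_left_comm]

lemma laplacian_comp_norm_sq {f f' : ℝ → ℝ} {f'' : ℝ} {x : EuclideanSpace ℝ (Fin d)}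
    (hf : ∀ s ≥ 0, HasDerivAt f (f' s) s) (hf' : HasDerivAt f' f'' (‖x‖ ^ 2)) :
    laplacian (fun y => f (‖y‖ ^ 2)) x = 2 * d * f' (‖x‖ ^ 2) + 4 * (‖x‖ ^ 2 * f'') := by
  have hsecond (i : Fin d) :
      fderiv ℝ (fun y => fderiv ℝ (fun z => f (‖z‖ ^ 2)) y (EuclideanSpace.single i 1)) x
        (EuclideanSpace.single i 1) = 2 * f' (‖x‖ ^ 2) + 4 * (x i ^ 2 * f'') := by
    have hdiff : DifferentiableAt ℝ (fun y : EuclideanSpace ℝ (Fin d) => f' (‖y‖ ^ 2)) x :=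
      hf'.differentiableAt.comp x (differentiableAt_id.norm_sq ℝ)
    simp only [fun y : EuclideanSpace ℝ (Fin d) => fderiv_comp_norm_sq_single
      (hf (‖y‖ ^ 2) (sq_nonneg _)) i]
    have hcoord : HasFDerivAt (fun y : EuclideanSpace ℝ (Fin d) => y i)
        (EuclideanSpace.proj (𝕜 := ℝ) i) x := (EuclideanSpace.proj (𝕜 := ℝ) i).hasFDerivAt
    have hmul : HasFDerivAt (fun y : EuclideanSpace ℝ (Fin d) => 2 * (f' (‖y‖ ^ 2) * y i)) _ x :=
      (hdiff.hasFDerivAt.mul hcoord).const_mul 2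
    rw [hmul.fderiv]
    simp only [smul_add, add_apply, smul_apply, PiLp.proj_apply, PiLp.single_eq_same, smul_eq_mul,
      mul_one, fderiv_comp_norm_sq_single hf']
    ring
  simp only [laplacian, hsecond]
  rw [Finset.sum_add_distrib, Finset.sum_const, Finset.card_univ, Fintype.card_fin,
    nsmul_eq_mul, ← Finset.mul_sum, ← Finset.sum_mul, ← EuclideanSpace.real_norm_sq_eq]
  ring

end Laplacian

section RadialProfile

variable {d : ℕ} {f f' : ℝ → ℝ} {ψ : EuclideanSpace ℝ (Fin d) → ℝ}

lemma integral_comp_norm_sq_add_mul_laplacian {f'' : ℝ → ℝ}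
    (hf : ∀ s ∈ Ioi 0, HasDerivAt f (f' s) s) (hf' : ∀ s ∈ Ioi 0, HasDerivAt f' (f'' s) s)
    (hf'' : ContinuousOn f'' (Ioi 0)) (hψ : ContDiff ℝ 2 ψ) (hψs : HasCompactSupport ψ)
    {ε : ℝ} (hε : 0 < ε) :
    ∫ x, f (‖x‖ ^ 2 + ε) * laplacian ψ x =
      (∫ x, (2 * d * f' (‖x‖ ^ 2 + ε) + 4 * ((‖x‖ ^ 2 + ε) * f'' (‖x‖ ^ 2 + ε))) * ψ x) -
        4 * ∫ x, ε * f'' (‖x‖ ^ 2 + ε) * ψ x := by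
  have hf'_contDiff : ContDiffOn ℝ 1 f' (Ioi 0) := by
    simpa using contDiffOn_succ_of_hasDerivAt isOpen_Ioi hf' (contDiffOn_zero.2 hf'')
  have hf_contDiff : ContDiffOn ℝ 2 f (Ioi 0) := by
    simpa [one_add_one_eq_two] using
      contDiffOn_succ_of_hasDerivAt isOpen_Ioi hf (n := 1) (by simpa using hf'_contDiff)
  have hu : ContDiff ℝ 2 fun x : EuclideanSpace ℝ (Fin d) => f (‖x‖ ^ 2 + ε) :=
    hf_contDiff.comp_contDiff ((contDiff_norm_sq ℝ).add contDiff_const) fun x => by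
      rw [mem_Ioi]
      positivity
  have hlap (x : EuclideanSpace ℝ (Fin d)) : laplacian (fun y => f (‖y‖ ^ 2 + ε)) x =
      2 * d * f' (‖x‖ ^ 2 + ε) + 4 * (‖x‖ ^ 2 * f'' (‖x‖ ^ 2 + ε)) :=
    laplacian_comp_norm_sq (f := fun s => f (s + ε)) (f' := fun s => f' (s + ε))
      (fun s hs => (hf (s + ε) (add_pos_of_nonneg_of_pos hs hε)).comp_add_const s ε)
      ((hf' _ (add_pos_of_nonneg_of_pos (sq_nonneg _) hε)).comp_add_const _ ε)
  have integrable_mul {g : ℝ → ℝ} (hg : ContinuousOn g (Ioi 0)) :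
      Integrable fun x => g (‖x‖ ^ 2 + ε) * ψ x :=
    ((continuous_comp_norm_sq_add hg hε).mul hψ.continuous).integrable_of_hasCompactSupport
      hψs.mul_left
  rw [integral_mul_laplacian_comm hu hψ hψs, ← integral_const_mul, ← integral_sub]
  · congr with x
    rw [hlap]
    ring
  · exact integrable_mul ((hf'_contDiff.continuousOn.const_mul _).add
      ((continuousOn_id.mul hf'').const_mul 4))
  · exact (integrable_mul (hf''.const_mul ε)).const_mul 4

variable [NeZero d]

lemma integral_comp_norm_sq_mul_laplacian {f'' : ℝ → ℝ} {b : ℝ}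
    (hf : ∀ s ∈ Ioi 0, HasDerivAt f (f' s) s) (hf' : ∀ s ∈ Ioi 0, HasDerivAt f' (f'' s) s)
    (hf'' : ContinuousOn f'' (Ioi 0)) (hO : f =O[𝓝[>] 0] (· ^ b))
    (hO' : f' =O[𝓝[>] 0] (· ^ b)) (hO'' : (fun s => s * f'' s) =O[𝓝[>] 0] (· ^ b))
    (hb : -(d : ℝ) / 2 < b) (hb₀ : b ≤ 0) (hψ : ContDiff ℝ 2 ψ) (hψs : HasCompactSupport ψ) :
    ∫ x, f (‖x‖ ^ 2) * laplacian ψ x =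
      ∫ x, (2 * d * f' (‖x‖ ^ 2) + 4 * (‖x‖ ^ 2 * f'' (‖x‖ ^ 2))) * ψ x := by
  rw [← finrank_euclideanSpace_fin (𝕜 := ℝ) (n := d)] at hb
  have hf_cont : ContinuousOn f (Ioi 0) := HasDerivAt.continuousOn hf
  have hf'_cont : ContinuousOn f' (Ioi 0) := HasDerivAt.continuousOn hf'
  have hleft := tendsto_integral_comp_norm_sq_add (μ := volume) hf_cont hO hb hb₀
    (contDiff_laplacian hψ (m := 0) (by simp)).continuous (hasCompactSupport_laplacian hψs)
  have hmain := tendsto_integral_comp_norm_sq_add (μ := volume)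
    (f := fun s => 2 * d * f' s + 4 * (s * f'' s))
    ((hf'_cont.const_mul _).add ((continuousOn_id.mul hf'').const_mul 4))
    ((hO'.const_mul_left _).add (hO''.const_mul_left 4)) hb hb₀ hψ.continuous hψs
  have herror := tendsto_integral_mul_comp_norm_sq_add_zero (μ := volume) hf'' hO'' hb hb₀
    hψ.continuous hψs
  have hright := hmain.sub (herror.const_mul 4)
  rw [mul_zero, sub_zero] at hright
  refine tendsto_nhds_unique hleft (hright.congr' ?_)
  filter_upwards [self_mem_nhdsWithin] with ε hε
  exact (integral_comp_norm_sq_add_mul_laplacian hf hf' hf'' hψ hψs hε).symm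

lemma natCast_mul_volume_real_ball :
    d * volume.real (ball (0 : EuclideanSpace ℝ (Fin d)) 1) =
      2 * Real.pi ^ ((d : ℝ) / 2) / Real.Gamma ((d : ℝ) / 2) := by
  have hd : (d : ℝ) ≠ 0 := NeZero.ne _
  have hΓ : 0 < Real.Gamma ((d : ℝ) / 2 + 1) := Real.Gamma_pos_of_pos (by positivity)
  rw [Measure.real, EuclideanSpace.volume_ball, ENNReal.ofReal_one, one_pow, one_mul,
    ENNReal.toReal_ofReal (by positivity), Fintype.card_fin, Real.sqrt_eq_rpow,
    ← Real.rpow_mul_natCast Real.pi_pos.le, one_div_mul_eq_div,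
    Real.Gamma_add_one (div_ne_zero hd two_ne_zero)]
  field_simp [hΓ.ne']

-- Here the radial part of the Laplacian vanishes and the error term is an approximate identity.
lemma integral_comp_norm_sq_mul_laplacian_of_hasDerivAt_rpow {b c : ℝ}
    (hf : ∀ s ∈ Ioi 0, HasDerivAt f (c * s ^ (-(d : ℝ) / 2)) s) (hO : f =O[𝓝[>] 0] (· ^ b))
    (hb : -(d : ℝ) / 2 < b) (hb₀ : b ≤ 0) (hψ : ContDiff ℝ 2 ψ) (hψs : HasCompactSupport ψ) :
    ∫ x, f (‖x‖ ^ 2) * laplacian ψ x =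
      2 * c * (2 * Real.pi ^ ((d : ℝ) / 2) / Real.Gamma ((d : ℝ) / 2)) * ψ 0 := by
  set f'' : ℝ → ℝ := fun s => c * (-(d : ℝ) / 2 * s ^ (-(d : ℝ) / 2 - 1)) with hf''_def
  have hf' : ∀ s ∈ Ioi 0, HasDerivAt (fun s => c * s ^ (-(d : ℝ) / 2)) (f'' s) s :=
    fun s hs => (Real.hasDerivAt_rpow_const (Or.inl (ne_of_gt hs))).const_mul c
  have hf'' : ContinuousOn f'' (Ioi 0) :=
    ((continuousOn_id.rpow_const fun s hs => Or.inl (ne_of_gt hs)).const_mul _).const_mul c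
  have hradial {s : ℝ} (hs : 0 < s) :
      2 * d * (c * s ^ (-(d : ℝ) / 2)) + 4 * (s * f'' s) = 0 := by
    simp only [hf''_def, Real.rpow_sub_one hs.ne']
    field_simp
    ring
  have hleft := tendsto_integral_comp_norm_sq_add (μ := volume) (HasDerivAt.continuousOn hf) hO
    (by rwa [finrank_euclideanSpace_fin]) hb₀
    (contDiff_laplacian hψ (m := 0) (by simp)).continuous (hasCompactSupport_laplacian hψs)
  have hdelta := (tendsto_integral_mul_norm_sq_add_rpow (μ := volume)
    (hψ.continuous.integrable_of_hasCompactSupport hψs) hψ.continuous.continuousAt).const_mul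
      (2 * d * c)
  rw [finrank_euclideanSpace_fin, ← mul_assoc, mul_right_comm 2 (d : ℝ) c, mul_assoc (2 * c),
    natCast_mul_volume_real_ball] at hdelta
  refine tendsto_nhds_unique hleft (hdelta.congr' ?_)
  filter_upwards [self_mem_nhdsWithin] with ε hε
  have hpos (x : EuclideanSpace ℝ (Fin d)) : 0 < ‖x‖ ^ 2 + ε :=
    add_pos_of_nonneg_of_pos (sq_nonneg _) hε
  rw [integral_comp_norm_sq_add_mul_laplacian hf hf' hf'' hψ hψs hε]
  simp only [hradial (hpos _), zero_mul, integral_zero, zero_sub, ← integral_const_mul,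
    ← integral_neg]
  congr with x
  ring

end RadialProfile

section LogPow

/-- The profiles `s ^ a * (A * log s + B)`, closed under differentiation and containing every
`polyharmonicG d k` as a function of `s = ‖x - x'‖ ^ 2`. -/
noncomputable def logPow (a A B s : ℝ) : ℝ := s ^ a * (A * Real.log s + B)

lemma self_mul_logPow_sub_one (a A B : ℝ) {s : ℝ} (hs : s ≠ 0) :
    s * logPow (a - 1) A B s = logPow a A B s := by
  rw [logPow, logPow, Real.rpow_sub_one hs]
  field_simp

lemma hasDerivAt_logPow (a A B : ℝ) {s : ℝ} (hs : s ≠ 0) :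
    HasDerivAt (logPow a A B) (logPow (a - 1) (a * A) (a * B + A) s) s := by
  refine ((Real.hasDerivAt_rpow_const (Or.inl hs)).mul
    (((Real.hasDerivAt_log hs).const_mul A).add_const B)).congr_deriv ?_
  rw [logPow, Real.rpow_sub_one hs]
  field_simp
  ring

lemma continuousOn_logPow (a A B : ℝ) : ContinuousOn (logPow a A B) (Ioi 0) :=
  HasDerivAt.continuousOn fun _ hs => hasDerivAt_logPow a A B (ne_of_gt hs)

lemma logPow_isBigO {a b : ℝ} (hab : b < a) (A B : ℝ) :
    logPow a A B =O[𝓝[>] 0] (· ^ b) := by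
  have hlog : (fun s => A * Real.log s + B) =O[𝓝[>] 0] (· ^ (b - a)) := by
    refine ((isLittleO_log_rpow_nhdsGT_zero (by linarith)).isBigO.const_mul_left A).add ?_
    refine (isLittleO_const_left.2 (Or.inr ?_)).isBigO
    exact tendsto_norm_atTop_atTop.comp (tendsto_rpow_neg_nhdsGT_zero (by linarith))
  refine ((isBigO_refl (· ^ a) _).mul hlog).congr' .rfl ?_
  filter_upwards [self_mem_nhdsWithin] with s hs
  rw [← Real.rpow_add hs, add_sub_cancel]

variable {d : ℕ} [NeZero d] {ψ : EuclideanSpace ℝ (Fin d) → ℝ}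

lemma integral_logPow_mul_laplacian {a : ℝ} (ha : -(d : ℝ) / 2 < a - 1) (A B : ℝ)
    (hψ : ContDiff ℝ 2 ψ) (hψs : HasCompactSupport ψ) :
    ∫ x, logPow a A B (‖x‖ ^ 2) * laplacian ψ x =
      ∫ x, logPow (a - 1) (4 * (a - 1 + d / 2) * a * A)
        (4 * (a - 1 + d / 2) * a * B + 4 * (2 * a - 1 + d / 2) * A) (‖x‖ ^ 2) * ψ x := by
  have hd : (0 : ℝ) < d := Nat.cast_pos.2 (NeZero.pos d)
  obtain ⟨b, hdb, hb⟩ : ∃ b, -(d : ℝ) / 2 < b ∧ b < min (a - 1) 0 :=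
    exists_between (lt_min ha (by linarith))
  obtain ⟨hba, hb₀⟩ := lt_min_iff.1 hb
  have hO'' : (fun s => s * logPow (a - 1 - 1) ((a - 1) * (a * A))
      ((a - 1) * (a * B + A) + a * A) s) =O[𝓝[>] 0] (· ^ b) := by
    refine (logPow_isBigO hba ((a - 1) * (a * A)) ((a - 1) * (a * B + A) + a * A)).congr' ?_ .rfl
    filter_upwards [self_mem_nhdsWithin] with s hs
    exact (self_mul_logPow_sub_one _ _ _ (ne_of_gt hs)).symm
  rw [integral_comp_norm_sq_mul_laplacian (fun s hs => hasDerivAt_logPow a A B (ne_of_gt hs))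
    (fun s hs => hasDerivAt_logPow _ _ _ (ne_of_gt hs)) (continuousOn_logPow _ _ _)
    (logPow_isBigO (by linarith) A B) (logPow_isBigO hba _ _) hO'' hdb hb₀.le hψ hψs]
  refine integral_congr_ae ?_
  filter_upwards [Measure.ae_ne volume 0] with x hx
  rw [self_mul_logPow_sub_one _ _ _ (by positivity)]
  unfold logPow
  ring

lemma integral_logPow_mul_laplacian_of_mul_eq_zero {A : ℝ} (B : ℝ)
    (hA : (1 - (d : ℝ) / 2) * A = 0) (hψ : ContDiff ℝ 2 ψ) (hψs : HasCompactSupport ψ) :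
    ∫ x, logPow (1 - d / 2) A B (‖x‖ ^ 2) * laplacian ψ x =
      2 * ((1 - d / 2) * B + A) * (2 * Real.pi ^ ((d : ℝ) / 2) / Real.Gamma ((d : ℝ) / 2)) *
        ψ 0 := by
  have hd : (0 : ℝ) < d := Nat.cast_pos.2 (NeZero.pos d)
  obtain ⟨b, hdb, hb⟩ : ∃ b, -(d : ℝ) / 2 < b ∧ b < min (1 - (d : ℝ) / 2) 0 :=
    exists_between (lt_min (by linarith) (by linarith))
  obtain ⟨hb₁, hb₀⟩ := lt_min_iff.1 hb
  refine integral_comp_norm_sq_mul_laplacian_of_hasDerivAt_rpow (fun s hs => ?_)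
    (logPow_isBigO hb₁ A B) hdb hb₀.le hψ hψs
  refine (hasDerivAt_logPow _ A B (ne_of_gt hs)).congr_deriv ?_
  rw [hA, logPow]
  ring_nf

end LogPow

section Coefficients

/-- The coefficient of `log ‖x - x'‖ ^ 2` in `polyharmonicG d k`. The power `4 ^ k` combines the
normalisation `2 ^ (2 * k - 1)` with `log ‖x - x'‖ = log (‖x - x'‖ ^ 2) / 2`. -/
noncomputable def logCoeff (d k : ℕ) : ℝ :=
  if Even d ∧ d / 2 ≤ k then
    (-1) ^ (k + d / 2 + 1) / ((k - 1).factorial * (k - d / 2).factorial * 4 ^ k * Real.pi ^ (d / 2))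
  else 0

/-- The coefficient of the pure power `‖x - x'‖ ^ (2 * k - d)` in `polyharmonicG d k`. -/
noncomputable def constCoeff (d k : ℕ) : ℝ :=
  if Even d ∧ d / 2 ≤ k then -2 * logCoeff d k * betaConst (k - d / 2) d
  else Real.Gamma (d / 2 - k) / ((k - 1).factorial * 4 ^ k * Real.pi ^ ((d : ℝ) / 2))

lemma polyharmonicG_eq_logPow {d k : ℕ} (hk : 1 ≤ k) (x x' : EuclideanSpace ℝ (Fin d)) :
    polyharmonicG d k x x' =
      logPow (k - d / 2) (logCoeff d k) (constCoeff d k) (‖x - x'‖ ^ 2) := by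
  have hnorm : ‖x - x'‖ ^ (2 * (k : ℝ) - d) = (‖x - x'‖ ^ 2) ^ ((k : ℝ) - d / 2) := by
    rw [← Real.rpow_natCast_mul (norm_nonneg _)]
    congr 1
    push_cast
    ring
  have hfour : (4 : ℝ) ^ k = 2 * 2 ^ (2 * k - 1) := by
    rw [← pow_succ', Nat.sub_add_cancel (by omega), pow_mul]
    norm_num
  rw [polyharmonicG, logPow, hnorm, Real.log_pow]
  by_cases hlog : Even d ∧ d / 2 ≤ k
  · simp only [constCoeff, logCoeff, if_pos hlog, hfour]
    field_simp
    push_cast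
    ring
  · simp only [constCoeff, logCoeff, if_neg hlog, pow_mul, zero_mul, zero_add]
    rw [show (2 : ℝ) ^ 2 = 4 by norm_num]
    ring

lemma logCoeff_of_not {d k : ℕ} (h : ¬(Even d ∧ d / 2 ≤ k)) : logCoeff d k = 0 := if_neg h

lemma constCoeff_of_not {d k : ℕ} (h : ¬(Even d ∧ d / 2 ≤ k)) :
    constCoeff d k =
      Real.Gamma (d / 2 - k) / ((k - 1).factorial * 4 ^ k * Real.pi ^ ((d : ℝ) / 2)) := if_neg h

lemma logCoeff_two_mul (m p : ℕ) :
    logCoeff (2 * m) (m + p) =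
      (-1) ^ (p + 1) / ((m + p - 1).factorial * p.factorial * 4 ^ (m + p) * Real.pi ^ m) := by
  have hm : 2 * m / 2 = m := by omega
  rw [logCoeff, if_pos ⟨even_two_mul m, by omega⟩, hm, Nat.add_sub_cancel_left,
    show m + p + m + 1 = 2 * m + (p + 1) by ring, pow_add _ (2 * m), (even_two_mul m).neg_one_pow,
    one_mul]

lemma constCoeff_two_mul (m p : ℕ) :
    constCoeff (2 * m) (m + p) = -2 * logCoeff (2 * m) (m + p) * betaConst p (2 * m) := by
  rw [constCoeff, if_pos ⟨even_two_mul m, by omega⟩, Nat.mul_div_cancel_left m two_pos,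
    Nat.add_sub_cancel_left]

lemma harmonicNum_succ (j : ℕ) : harmonicNum (j + 1) = harmonicNum j + 1 / (j + 1) :=
  Finset.sum_range_succ _ _

lemma betaConst_succ {m p : ℕ} (h : 1 ≤ m + p) :
    betaConst (p + 1) (2 * m) = betaConst p (2 * m) + 1 / 2 * (1 / (p + 1) + 1 / (m + p)) := by
  obtain ⟨n, hn⟩ : ∃ n, m + p = n + 1 := ⟨m + p - 1, by omega⟩
  have hn' : (m : ℝ) + p = n + 1 := by exact_mod_cast hn
  rw [betaConst, betaConst, Nat.mul_div_cancel_left m two_pos, ← add_assoc, hn,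
    Nat.add_sub_cancel, Nat.add_sub_cancel, harmonicNum_succ, harmonicNum_succ, hn']
  ring

lemma logCoeff_two_mul_succ {m p : ℕ} (h : 1 ≤ m + p) :
    -(4 * (m + p) * (p + 1) * logCoeff (2 * m) (m + p + 1)) = logCoeff (2 * m) (m + p) := by
  obtain ⟨n, hn⟩ : ∃ n, m + p = n + 1 := ⟨m + p - 1, by omega⟩
  have hn' : (m : ℝ) + p = n + 1 := by exact_mod_cast hn
  rw [add_assoc m, logCoeff_two_mul, logCoeff_two_mul, ← add_assoc, hn, hn', Nat.add_sub_cancel,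
    Nat.add_sub_cancel, Nat.factorial_succ n, Nat.factorial_succ p]
  push_cast
  field_simp
  ring

lemma constCoeff_two_mul_succ {m p : ℕ} (h : 1 ≤ m + p) :
    -(4 * (m + p) * (p + 1) * constCoeff (2 * m) (m + p + 1) +
      4 * (m + 2 * p + 1) * logCoeff (2 * m) (m + p + 1)) = constCoeff (2 * m) (m + p) := by
  have hmp : (m : ℝ) + p ≠ 0 := by exact_mod_cast (by omega : m + p ≠ 0)
  rw [constCoeff_two_mul m p, ← logCoeff_two_mul_succ h, add_assoc m p 1,
    constCoeff_two_mul m (p + 1), betaConst_succ h]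
  field_simp
  ring

lemma logCoeff_two_mul_self {k : ℕ} :
    logCoeff (2 * (k + 1)) (k + 1) = -1 / (k.factorial * 4 ^ (k + 1) * Real.pi ^ (k + 1)) := by
  simpa using logCoeff_two_mul (k + 1) 0

lemma constCoeff_transition {k : ℕ} (hk : 1 ≤ k) :
    -(4 * k * logCoeff (2 * (k + 1)) (k + 1)) = constCoeff (2 * (k + 1)) k := by
  have hΓ : ((2 * (k + 1) : ℕ) : ℝ) / 2 - k = 1 := by
    push_cast
    ring
  have hpi : ((2 * (k + 1) : ℕ) : ℝ) / 2 = ((k + 1 : ℕ) : ℝ) := by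
    push_cast
    ring
  obtain ⟨n, rfl⟩ := Nat.exists_eq_add_of_le' hk
  rw [constCoeff_of_not (by omega), hΓ, hpi, Real.rpow_natCast, Real.Gamma_one,
    logCoeff_two_mul_self, Nat.factorial_succ, Nat.add_sub_cancel]
  push_cast
  field_simp
  ring

lemma constCoeff_succ_of_not {d k : ℕ} (hk : 1 ≤ k) (h : ¬(Even d ∧ d / 2 ≤ k + 1)) :
    -(4 * k * (k + 1 - d / 2) * constCoeff d (k + 1)) = constCoeff d k := by
  have hne : (d : ℝ) / 2 - (k + 1) ≠ 0 := fun h₀ => by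
    have hd : d = 2 * (k + 1) := by exact_mod_cast (by linarith : (d : ℝ) = 2 * (k + 1))
    exact h ⟨hd ▸ even_two_mul _, by omega⟩
  have hΓ : Real.Gamma (d / 2 - k) = (d / 2 - (k + 1)) * Real.Gamma (d / 2 - (k + 1)) := by
    rw [← Real.Gamma_add_one hne]
    ring_nf
  obtain ⟨n, rfl⟩ := Nat.exists_eq_add_of_le' hk
  rw [constCoeff_of_not h, constCoeff_of_not fun h' => h ⟨h'.1, by omega⟩, hΓ,
    Nat.add_sub_cancel, Nat.add_sub_cancel, Nat.factorial_succ]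
  push_cast
  field_simp
  ring

lemma eq_two_mul_or_not_even_and_half_le_succ (d k : ℕ) :
    (∃ m p, d = 2 * m ∧ k = m + p) ∨ d = 2 * (k + 1) ∨ ¬(Even d ∧ d / 2 ≤ k + 1) := by
  by_cases h : Even d ∧ d / 2 ≤ k + 1
  · obtain ⟨⟨m, rfl⟩, hm⟩ := h
    rcases (by omega : m ≤ k ∨ m = k + 1) with hmk | rfl
    · exact .inl ⟨m, k - m, by omega, by omega⟩
    · exact .inr (.inl (by omega))
  · exact .inr (.inr h)

lemma logCoeff_succ {k : ℕ} (d : ℕ) (hk : 1 ≤ k) :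
    -(4 * k * (k + 1 - d / 2) * logCoeff d (k + 1)) = logCoeff d k := by
  rcases eq_two_mul_or_not_even_and_half_le_succ d k with ⟨m, p, rfl, rfl⟩ | rfl | h
  · rw [← logCoeff_two_mul_succ hk]
    push_cast
    ring
  · rw [logCoeff_of_not (by omega : ¬(_ ∧ 2 * (k + 1) / 2 ≤ k))]
    push_cast
    ring
  · rw [logCoeff_of_not h, logCoeff_of_not fun h' => h ⟨h'.1, by omega⟩]
    ring

lemma constCoeff_succ {k : ℕ} (d : ℕ) (hk : 1 ≤ k) :
    -(4 * k * (k + 1 - d / 2) * constCoeff d (k + 1) +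
      4 * (2 * k + 1 - d / 2) * logCoeff d (k + 1)) = constCoeff d k := by
  rcases eq_two_mul_or_not_even_and_half_le_succ d k with ⟨m, p, rfl, rfl⟩ | rfl | h
  · rw [← constCoeff_two_mul_succ hk]
    push_cast
    ring
  · rw [← constCoeff_transition hk]
    push_cast
    ring
  · rw [← constCoeff_succ_of_not hk h, logCoeff_of_not h]
    ring

lemma one_sub_half_mul_logCoeff_one {d : ℕ} (hd : 1 ≤ d) :
    (1 - (d : ℝ) / 2) * logCoeff d 1 = 0 := by
  by_cases h : Even d ∧ d / 2 ≤ 1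
  · obtain rfl : d = 2 := by
      obtain ⟨⟨m, rfl⟩, h⟩ := h
      omega
    norm_num
  · rw [logCoeff_of_not h, mul_zero]

lemma one_sub_half_mul_constCoeff_one_add_logCoeff_one {d : ℕ} (hd : 1 ≤ d) :
    (1 - (d : ℝ) / 2) * constCoeff d 1 + logCoeff d 1 =
      -(Real.Gamma (d / 2) / (4 * Real.pi ^ ((d : ℝ) / 2))) := by
  by_cases h : Even d ∧ d / 2 ≤ 1
  · obtain rfl : d = 2 := by
      obtain ⟨⟨m, rfl⟩, h⟩ := h
      omega
    have hlog : logCoeff 2 1 = -1 / (4 * Real.pi) := by simpa using logCoeff_two_mul_self (k := 0)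
    rw [hlog, Nat.cast_two, div_self two_ne_zero, Real.Gamma_one, Real.rpow_one]
    ring
  · have hne : (d : ℝ) / 2 - 1 ≠ 0 := fun h₀ => by
      have hd : d = 2 := by exact_mod_cast (by linarith : (d : ℝ) = 2)
      exact h (by subst hd; decide)
    have hΓ : Real.Gamma (d / 2) = (d / 2 - 1) * Real.Gamma (d / 2 - 1) := by
      rw [← Real.Gamma_add_one hne, sub_add_cancel]
    rw [constCoeff_of_not h, logCoeff_of_not h, hΓ, Nat.sub_self,
      Nat.factorial_zero, Nat.cast_one]
    field_simp
    ring

end Coefficients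

section Iterates

variable {d : ℕ}

lemma negLapIter_succ (k : ℕ) (f : EuclideanSpace ℝ (Fin d) → ℝ) :
    negLapIter (k + 1) f = fun x => -laplacian (negLapIter k f) x :=
  Function.iterate_succ_apply' _ k f

lemma contDiff_negLapIter {m n : WithTop ℕ∞} {k : ℕ} {f : EuclideanSpace ℝ (Fin d) → ℝ}
    (hf : ContDiff ℝ n f) (hmn : m + (2 * k : ℕ) ≤ n) : ContDiff ℝ m (negLapIter k f) := by
  induction k generalizing m with
  | zero => exact hf.of_le (by simpa using hmn)
  | succ k ih =>
    rw [negLapIter_succ]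
    refine (contDiff_laplacian (ih (m := m + 2) ?_) le_rfl).neg
    convert hmn using 1
    push_cast
    ring

lemma hasCompactSupport_negLapIter (k : ℕ) {f : EuclideanSpace ℝ (Fin d) → ℝ}
    (hf : HasCompactSupport f) : HasCompactSupport (negLapIter k f) := by
  induction k with
  | zero => exact hf
  | succ k ih =>
    rw [negLapIter_succ]
    exact (hasCompactSupport_laplacian ih).neg

lemma negLapIter_comp_add_right (k : ℕ) (f : EuclideanSpace ℝ (Fin d) → ℝ)
    (c : EuclideanSpace ℝ (Fin d)) :
    negLapIter k (fun y => f (y + c)) = fun x => negLapIter k f (x + c) := by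
  induction k with
  | zero => rfl
  | succ k ih => rw [negLapIter_succ, negLapIter_succ, ih, laplacian_comp_add_right]

variable {φ : EuclideanSpace ℝ (Fin d) → ℝ} [NeZero d]

lemma integral_logPow_mul_neg_laplacian {k : ℕ} (hk : 1 ≤ k) (hφ : ContDiff ℝ 2 φ)
    (hφs : HasCompactSupport φ) :
    ∫ x, logPow ((k + 1 : ℕ) - d / 2) (logCoeff d (k + 1)) (constCoeff d (k + 1)) (‖x‖ ^ 2) *
        -laplacian φ x =
      ∫ x, logPow (k - d / 2) (logCoeff d k) (constCoeff d k) (‖x‖ ^ 2) * φ x := by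
  have hk₀ : (0 : ℝ) < k := by exact_mod_cast hk
  simp only [mul_neg]
  rw [integral_neg, integral_logPow_mul_laplacian (by push_cast; linarith) _ _ hφ hφs,
    ← integral_neg, ← logCoeff_succ d hk, ← constCoeff_succ d hk]
  congr with x
  unfold logPow
  push_cast
  ring_nf

lemma integral_logPow_one_mul_neg_laplacian (hφ : ContDiff ℝ 2 φ) (hφs : HasCompactSupport φ) :
    ∫ x, logPow (1 - d / 2) (logCoeff d 1) (constCoeff d 1) (‖x‖ ^ 2) * -laplacian φ x = φ 0 := by
  have hd : 1 ≤ d := NeZero.one_le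
  have hΓ : 0 < Real.Gamma ((d : ℝ) / 2) := Real.Gamma_pos_of_pos (by positivity)
  simp only [mul_neg]
  rw [integral_neg, integral_logPow_mul_laplacian_of_mul_eq_zero _
    (one_sub_half_mul_logCoeff_one hd) hφ hφs,
    one_sub_half_mul_constCoeff_one_add_logCoeff_one hd]
  field_simp [hΓ.ne']
  ring

lemma integral_logPow_mul_negLapIter {k : ℕ} (hk : 1 ≤ k) (hφ : ContDiff ℝ (2 * k : ℕ) φ)
    (hφs : HasCompactSupport φ) :
    ∫ x, logPow (k - d / 2) (logCoeff d k) (constCoeff d k) (‖x‖ ^ 2) * negLapIter k φ x =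
      φ 0 := by
  induction k, hk using Nat.le_induction with
  | base =>
    rw [Nat.cast_one]
    exact integral_logPow_one_mul_neg_laplacian hφ hφs
  | succ k hk ih =>
    have hiter : ContDiff ℝ 2 (negLapIter k φ) := contDiff_negLapIter hφ
      (by exact_mod_cast (by omega : 2 + 2 * k ≤ 2 * (k + 1)))
    rw [negLapIter_succ, integral_logPow_mul_neg_laplacian hk hiter
      (hasCompactSupport_negLapIter k hφs)]
    exact ih (hφ.of_le (by exact_mod_cast (by omega : 2 * k ≤ 2 * (k + 1))))

end Iterates

end Polyharmonic

open Polyharmonic in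
theorem polyharmonicG_fundamental_solution_general
    (d k : ℕ) (hd : 1 ≤ d) (hk : 1 ≤ k) (x' : EuclideanSpace ℝ (Fin d))
    (φ : EuclideanSpace ℝ (Fin d) → ℝ) (hφ : ContDiff ℝ (2 * k : ℕ) φ)
    (hsupp : HasCompactSupport φ) :
    ∫ x, polyharmonicG d k x x' * negLapIter k φ x = φ x' := by
  have : NeZero d := NeZero.of_pos hd
  have hcentered := integral_logPow_mul_negLapIter hk (φ := fun y => φ (y + x'))
    (hφ.comp (contDiff_id.add contDiff_const)) (hsupp.comp_homeomorph (Homeomorph.addRight x'))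
  rw [negLapIter_comp_add_right, zero_add] at hcentered
  rw [← hcentered, ← MeasureTheory.integral_add_right_eq_self _ x']
  simp only [polyharmonicG_eq_logPow hk, add_sub_cancel_right]

/-- `G_k^d` is a fundamental solution for `(-Δ)^k` on `ℝ^d`. -/
theorem polyharmonicG_fundamental_solution
    (d k : ℕ) (hd : 1 ≤ d) (hk : 1 ≤ k)
    (x' : EuclideanSpace ℝ (Fin d))
    (φ : EuclideanSpace ℝ (Fin d) → ℝ) (hφ : ContDiff ℝ (⊤ : ℕ∞) φ) (hsupp : HasCompactSupport φ) :
    ∫ x, polyharmonicG d k x x' * negLapIter k φ x = φ x' := by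
  exact polyharmonicG_fundamental_solution_general d k hd hk x' φ (contDiff_infty.1 hφ _) hsupp
end

section
/- Let d ∈ {3, 4, 5, …}, ν ∈ ℂ with −ν/2 ∉ −ℕ₀, and x, x' ∈ ℝ^d with r := ‖x‖ > 0, r' := ‖x'‖ > 0, r ≠ r', and cos γ := (x, x')/(r r'). Then ‖x − x'‖^ν = ( e^{iπ(ν+d−1)/2} Γ((d−2)/2) ) / ( 2√π Γ(−ν/2) ) · ( (r_>² − r_<²)^{(ν+d−1)/2} / (r r')^{(d−1)/2} ) · Σ_{n=0}^∞ (2n + d − 2) Q_{n+(d−3)/2}^{(1−ν−d)/2}((r² + r'²)/(2rr')) C_n^{d/2−1}(cos γ), where r_< := min{r, r'} and r_> := max{r, r'}. -/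
open Complex

/-- Pochhammer symbol (rising factorial) `(a)_k = a (a+1) ⋯ (a+k-1)`. -/
noncomputable def poch (a : ℂ) (k : ℕ) : ℂ := ∏ i ∈ Finset.range k, (a + (i : ℂ))

/-- Gauss hypergeometric function `₂F₁(a,b;c;w)` as a series. -/
noncomputable def hyp2F1 (a b c w : ℂ) : ℂ :=
  ∑' k : ℕ, poch a k * poch b k / (poch c k * (Nat.factorial k : ℂ)) * w ^ k

/-- Terminating generalized hypergeometric function `₃F₂(-m,a₂,a₃;b₁,b₂;1)`. -/
noncomputable def hyp3F2 (m : ℕ) (a2 a3 b1 b2 : ℂ) : ℂ :=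
  ∑ j ∈ Finset.range (m + 1),
    poch (-(m : ℂ)) j * poch a2 j * poch a3 j /
      (poch b1 j * poch b2 j * (Nat.factorial j : ℂ))

/-- Gegenbauer polynomial `C_n^μ(x)`. -/
noncomputable def gegenbauerC (n : ℕ) (μ : ℂ) (x : ℂ) : ℂ :=
  poch (2 * μ) n / (Nat.factorial n : ℂ) *
    ∑ j ∈ Finset.range (n + 1),
      poch (-(n : ℂ)) j * poch ((n : ℂ) + 2 * μ) j /
          (poch (μ + 1 / 2) j * (Nat.factorial j : ℂ)) * ((1 - x) / 2) ^ j

/-- Associated Legendre function of the second kind `Q_ν^μ(z)` (principal branches). -/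
noncomputable def legendreQ (ν μ z : ℂ) : ℂ :=
  (Real.sqrt Real.pi : ℂ) * Complex.exp (Real.pi * I * μ) * Complex.Gamma (ν + μ + 1) *
      (z ^ 2 - 1) ^ (μ / 2) /
      ((2 : ℂ) ^ (ν + 1) * Complex.Gamma (ν + 3 / 2) * z ^ (ν + μ + 1)) *
    hyp2F1 ((ν + μ + 2) / 2) ((ν + μ + 1) / 2) (ν + 3 / 2) (1 / z ^ 2)

/-- Legendre polynomial `P_n(x)`. -/
noncomputable def legendrePoly (n : ℕ) (x : ℂ) : ℂ :=
  ∑ j ∈ Finset.range (n + 1),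
    poch (-(n : ℂ)) j * poch ((n : ℂ) + 1) j / (poch 1 j * (Nat.factorial j : ℂ)) *
      ((1 - x) / 2) ^ j

/-- Chebyshev polynomial of the second kind `U_n(x)`. -/
noncomputable def chebyshevU (n : ℕ) (x : ℂ) : ℂ :=
  ((n : ℂ) + 1) *
    ∑ j ∈ Finset.range (n + 1),
      poch (-(n : ℂ)) j * poch ((n : ℂ) + 2) j / (poch (3 / 2) j * (Nat.factorial j : ℂ)) *
        ((1 - x) / 2) ^ j

open scoped RealInnerProductSpace

/-!
Expand `(1 - t / z) ^ (-a)` in the binomial series and then each monomial `(2 * t) ^ m / m!` in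
Gegenbauer polynomials, which gives a double series. Since `C_n^μ(cos θ)` is a combination of the
`exp ((i - j) * θ * I)`, `i + j = n`, with nonnegative coefficients, every term of the connection
formula is largest in absolute value, and nonnegative, at `t = 1`; the formula at `t = 1` therefore
bounds the sum of the absolute values, and for `1 < |z|` the double series may be summed in any
order. Its part of Gegenbauer degree `n` is the hypergeometric series of `Q_{n+μ-1/2}^{a-μ-1/2}(z)`
in powers of `1 / z ^ 2`. For `z = (r² + r'²) / (2 r r')` and `t = cos γ` the law of cosines reads
`2 r r' (z - t) = ‖x - x'‖²`.
-/

open Finset.HasAntidiagonal (antidiagonal)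
open scoped ComplexOrder

section Pochhammer

lemma poch_zero (a : ℂ) : poch a 0 = 1 :=
  Finset.prod_range_zero _

lemma poch_succ (a : ℂ) (k : ℕ) : poch a (k + 1) = poch a k * (a + k) :=
  Finset.prod_range_succ _ _

lemma poch_succ_left (a : ℂ) (k : ℕ) : poch a (k + 1) = a * poch (a + 1) k := by
  simp only [poch, Finset.prod_range_succ', Nat.cast_add, Nat.cast_one, Nat.cast_zero, add_zero,
    mul_comm a, add_assoc, add_comm (1 : ℂ)]

lemma poch_add (a : ℂ) (n k : ℕ) : poch a (n + k) = poch a n * poch (a + n) k := by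
  simp only [poch, Finset.prod_range_add, Nat.cast_add, add_assoc]

lemma poch_eq_eval_ascPochhammer (a : ℂ) (k : ℕ) : poch a k = (ascPochhammer ℂ k).eval a := by
  induction k with
  | zero => simp [poch_zero]
  | succ k ih => rw [poch_succ, ascPochhammer_succ_eval, ih]

lemma poch_neg_natCast_of_lt {n k : ℕ} (h : n < k) : poch (-n) k = 0 := by
  rw [poch_eq_eval_ascPochhammer, ascPochhammer_eval_neg_coe_nat_of_lt h]

lemma poch_ne_zero {a : ℂ} (ha : ∀ m : ℕ, a ≠ -m) (k : ℕ) : poch a k ≠ 0 :=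
  Finset.prod_ne_zero_iff.2 fun i _ h ↦ ha i (eq_neg_of_add_eq_zero_left h)

lemma poch_half_mul_poch_half (a : ℂ) (k : ℕ) :
    poch ((a + 1) / 2) k * poch (a / 2) k = poch a (2 * k) / 4 ^ k := by
  induction k with
  | zero => simp [poch_zero]
  | succ k ih =>
    rw [eq_div_iff (by simp)] at ih ⊢
    rw [show 2 * (k + 1) = 2 * k + 1 + 1 by ring]
    simp only [poch_succ, ← ih]
    push_cast
    ring

lemma Gamma_natCast_add {a : ℂ} (ha : ∀ m : ℕ, a ≠ -m) (n : ℕ) :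
    Gamma (n + a) = poch a n * Gamma a := by
  rw [poch_eq_eval_ascPochhammer, ← Gamma_add_nat_div_Gamma_eq a ha,
    div_mul_cancel₀ _ (Gamma_ne_zero ha), add_comm]

lemma multichoose_eq_poch_div_factorial (a : ℂ) (n : ℕ) :
    Ring.multichoose a n = poch a n / n.factorial := by
  rw [eq_div_iff (Nat.cast_ne_zero.2 n.factorial_ne_zero), mul_comm, ← nsmul_eq_mul,
    Ring.factorial_nsmul_multichoose_eq_ascPochhammer, Polynomial.ascPochhammer_smeval_eq_eval,
    poch_eq_eval_ascPochhammer]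

lemma hasSum_one_sub_cpow_neg (a : ℂ) {w : ℂ} (hw : ‖w‖ < 1) :
    HasSum (fun m : ℕ ↦ poch a m / m.factorial * w ^ m) ((1 - w) ^ (-a)) := by
  have h := (one_div_one_sub_cpow_hasFPowerSeriesOnBall_zero a).hasSum (y := w)
    (by rwa [Metric.mem_eball, edist_zero_right, ← ofReal_norm, ENNReal.ofReal_lt_one])
  simpa only [FormalMultilinearSeries.ofScalars_apply_eq, ← Ring.multichoose_eq,
    multichoose_eq_poch_div_factorial, smul_eq_mul, zero_add, one_div, cpow_neg] using h

end Pochhammer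

section Gegenbauer

/-- The coefficient of `((1 - x) / 2) ^ j` in `gegenbauerC n μ x`. The two factors `poch (2 * μ) n`
and `poch (n + 2 * μ) j` of the definition are merged; the coefficient vanishes for `n < j`. -/
noncomputable def gegenbauerCoeff (μ : ℂ) (n j : ℕ) : ℂ :=
  poch (2 * μ) (n + j) * poch (-n) j / (n.factorial * (poch (μ + 1 / 2) j * j.factorial))

lemma gegenbauerC_eq_sum_range (μ x : ℂ) {n N : ℕ} (h : n < N) :
    gegenbauerC n μ x = ∑ j ∈ Finset.range N, gegenbauerCoeff μ n j * ((1 - x) / 2) ^ j := by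
  calc gegenbauerC n μ x
      = ∑ j ∈ Finset.range (n + 1), gegenbauerCoeff μ n j * ((1 - x) / 2) ^ j := by
        rw [gegenbauerC, Finset.mul_sum]
        refine Finset.sum_congr rfl fun j _ ↦ ?_
        rw [gegenbauerCoeff, poch_add, add_comm (2 * μ)]
        ring
    _ = _ := by
        refine Finset.sum_subset (Finset.range_subset_range.2 h) fun j _ hj ↦ ?_
        rw [gegenbauerCoeff, poch_neg_natCast_of_lt (by simpa using hj)]
        simp

lemma gegenbauerC_zero (μ x : ℂ) : gegenbauerC 0 μ x = 1 := by
  simp [gegenbauerC, poch_zero]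

lemma gegenbauerC_one {μ : ℂ} (hμ : μ + 1 / 2 ≠ 0) (x : ℂ) : gegenbauerC 1 μ x = 2 * μ * x := by
  have hμ' : 1 + 2 * μ ≠ 0 := fun h ↦ hμ (by linear_combination h / 2)
  rw [gegenbauerC, Finset.sum_range_succ, Finset.sum_range_one]
  simp only [poch_succ, poch_zero, Nat.factorial, show μ + 1 / 2 = (1 + 2 * μ) / 2 by ring,
    Nat.cast_zero, add_zero]
  push_cast
  field_simp
  ring

lemma gegenbauerCoeff_zero_recurrence (μ : ℂ) (n : ℕ) :
    (n + 2) * gegenbauerCoeff μ (n + 2) 0 + (n + 2 * μ) * gegenbauerCoeff μ n 0 =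
      2 * (n + 1 + μ) * gegenbauerCoeff μ (n + 1) 0 := by
  have hn1 : (n : ℂ) + 1 ≠ 0 := by exact_mod_cast n.succ_ne_zero
  have hn2 : (n : ℂ) + 1 + 1 ≠ 0 := by exact_mod_cast (n + 1).succ_ne_zero
  simp only [gegenbauerCoeff, poch_zero, poch_succ, Nat.factorial_succ, add_zero]
  push_cast
  field_simp
  ring

lemma gegenbauerCoeff_succ_recurrence {μ : ℂ} (hμ : ∀ m : ℕ, μ + 1 / 2 ≠ -m) (n j : ℕ) :
    (n + 2) * gegenbauerCoeff μ (n + 2) (j + 1) + (n + 2 * μ) * gegenbauerCoeff μ n (j + 1) =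
      2 * (n + 1 + μ) * (gegenbauerCoeff μ (n + 1) (j + 1) - 2 * gegenbauerCoeff μ (n + 1) j) := by
  have hn1 : (n : ℂ) + 1 ≠ 0 := by exact_mod_cast n.succ_ne_zero
  have hn2 : (n : ℂ) + 1 + 1 ≠ 0 := by exact_mod_cast (n + 1).succ_ne_zero
  have hj : (j : ℂ) + 1 ≠ 0 := by exact_mod_cast j.succ_ne_zero
  have hpoch : poch (μ + 1 / 2) j ≠ 0 := poch_ne_zero hμ j
  have hhalf : μ + 1 / 2 + j = (2 * μ + 1 + 2 * j) / 2 := by ring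
  have hfactor : 2 * μ + 1 + 2 * j ≠ 0 := fun h ↦ hμ j (by linear_combination h / 2)
  have hdown : poch (-(n + 2 : ℕ)) (j + 1) = -(n + 2) * poch (-(n + 1 : ℕ)) j := by
    rw [poch_succ_left]
    push_cast
    ring_nf
  have hup : poch (-n) j = poch (-(n + 1 : ℕ)) j * (n + 1 - j) / (n + 1) := by
    have h := poch_succ_left (-(n + 1 : ℕ)) j
    rw [poch_succ, show -((n + 1 : ℕ) : ℂ) + 1 = -n by push_cast; ring] at h
    push_cast at h ⊢
    field_simp
    linear_combination h
  simp only [gegenbauerCoeff, hdown]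
  rw [poch_succ (-n), hup, poch_succ (-(n + 1 : ℕ)), poch_succ (μ + 1 / 2), hhalf,
    show n + 2 + (j + 1) = n + 1 + j + 1 + 1 by ring, show n + 1 + (j + 1) = n + 1 + j + 1 by ring,
    show n + (j + 1) = n + 1 + j by ring, poch_succ _ (n + 1 + j + 1), poch_succ _ (n + 1 + j)]
  simp only [Nat.factorial_succ]
  push_cast
  generalize poch (-(n + 1)) j = P
  generalize poch (2 * μ) (n + 1 + j) = R
  generalize poch (μ + 1 / 2) j = S at *
  field_simp
  ring

lemma gegenbauerC_recurrence {μ : ℂ} (hμ : ∀ m : ℕ, μ + 1 / 2 ≠ -m) (x : ℂ) (n : ℕ) :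
    (n + 2) * gegenbauerC (n + 2) μ x + (n + 2 * μ) * gegenbauerC n μ x =
      2 * (n + 1 + μ) * x * gegenbauerC (n + 1) μ x := by
  obtain ⟨y, rfl⟩ : ∃ y, x = 1 - 2 * y := ⟨(1 - x) / 2, by ring⟩
  have hy : (1 - (1 - 2 * y)) / 2 = y := by ring
  have hterm (j : ℕ) :
      (n + 2) * (gegenbauerCoeff μ (n + 2) (j + 1) * y ^ (j + 1)) +
          (n + 2 * μ) * (gegenbauerCoeff μ n (j + 1) * y ^ (j + 1)) =
        2 * (n + 1 + μ) * (gegenbauerCoeff μ (n + 1) (j + 1) * y ^ (j + 1)) -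
          4 * (n + 1 + μ) * y * (gegenbauerCoeff μ (n + 1) j * y ^ j) := by
    linear_combination y ^ (j + 1) * gegenbauerCoeff_succ_recurrence hμ n j
  have hsum := Finset.sum_congr (rfl : Finset.range (n + 3) = _) fun j _ ↦ hterm j
  rw [Finset.sum_add_distrib, Finset.sum_sub_distrib] at hsum
  simp only [← Finset.mul_sum] at hsum
  have hlong : gegenbauerC (n + 1) μ (1 - 2 * y) =
      ∑ j ∈ Finset.range (n + 4), gegenbauerCoeff μ (n + 1) j * y ^ j := by
    rw [gegenbauerC_eq_sum_range μ _ (by lia : n + 1 < n + 4), hy]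
  have hshort : gegenbauerC (n + 1) μ (1 - 2 * y) =
      ∑ j ∈ Finset.range (n + 3), gegenbauerCoeff μ (n + 1) j * y ^ j := by
    rw [gegenbauerC_eq_sum_range μ _ (by lia : n + 1 < n + 3), hy]
  rw [gegenbauerC_eq_sum_range μ _ (by lia : n + 2 < n + 4),
    gegenbauerC_eq_sum_range μ _ (by lia : n < n + 4), hy]
  rw [← hshort] at hsum
  rw [Finset.sum_range_succ'] at hlong ⊢
  rw [Finset.sum_range_succ' _ (n + 3)]
  linear_combination hsum + gegenbauerCoeff_zero_recurrence μ n - 2 * (n + 1 + μ) * hlong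

lemma coeff_X_mul_derivative {R : Type*} [CommSemiring R] (f : PowerSeries R) (n : ℕ) :
    PowerSeries.coeff n (PowerSeries.X * PowerSeries.derivative R f) =
      n * PowerSeries.coeff n f := by
  cases n with
  | zero => simp
  | succ n =>
    rw [PowerSeries.coeff_succ_X_mul, PowerSeries.coeff_derivative, mul_comm]
    push_cast
    ring

/-- The formal power series in `X` of `(1 - u * X) ^ (-μ)`, the factor of the Gegenbauer generating
function belonging to one root of its quadratic. -/
noncomputable def negBinomialSeries (μ u : ℂ) : PowerSeries ℂ :=
  PowerSeries.mk fun i ↦ poch μ i / i.factorial * u ^ i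

lemma negBinomialSeries_euler (μ u : ℂ) :
    PowerSeries.X * PowerSeries.derivative ℂ (negBinomialSeries μ u) *
        (1 - PowerSeries.C u * PowerSeries.X) =
      PowerSeries.C (μ * u) * (negBinomialSeries μ u * PowerSeries.X) := by
  ext n
  rw [show ∀ f : PowerSeries ℂ, f * (1 - PowerSeries.C u * PowerSeries.X) =
    f - PowerSeries.C u * (f * PowerSeries.X) by intro f; ring]
  cases n with
  | zero => simp
  | succ n =>
    have hn : (n : ℂ) + 1 ≠ 0 := by exact_mod_cast n.succ_ne_zero
    simp only [map_sub, PowerSeries.coeff_C_mul, PowerSeries.coeff_succ_mul_X,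
      coeff_X_mul_derivative, negBinomialSeries, PowerSeries.coeff_mk, poch_succ,
      Nat.factorial_succ]
    push_cast
    field_simp
    ring

lemma coeff_negBinomialSeries_mul_recurrence (μ : ℂ) {u v : ℂ} (huv : u * v = 1) {s : ℕ → ℂ}
    (hs : ∀ n, s n = PowerSeries.coeff n (negBinomialSeries μ u * negBinomialSeries μ v)) (n : ℕ) :
    (n + 2) * s (n + 2) + (n + 2 * μ) * s n = (n + 1 + μ) * (u + v) * s (n + 1) := by
  set A := negBinomialSeries μ u
  set B := negBinomialSeries μ v
  let θ : PowerSeries ℂ := PowerSeries.X * PowerSeries.derivative ℂ (A * B)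
  have hode : θ - PowerSeries.C (u + v) * (θ * PowerSeries.X) + θ * PowerSeries.X * PowerSeries.X =
      PowerSeries.C (μ * (u + v)) * (A * B * PowerSeries.X) -
        PowerSeries.C (2 * μ) * (A * B * PowerSeries.X * PowerSeries.X) := by
    have hA := negBinomialSeries_euler μ u
    have hB := negBinomialSeries_euler μ v
    have hC : (PowerSeries.C u * PowerSeries.C v : PowerSeries ℂ) = 1 := by
      rw [← map_mul, huv, map_one]
    simp only [θ, Derivation.leibniz, smul_eq_mul, map_add, map_mul, map_ofNat] at hA hB ⊢
    linear_combination (1 - PowerSeries.C v * PowerSeries.X) * B * hA +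
      (1 - PowerSeries.C u * PowerSeries.X) * A * hB -
      PowerSeries.X ^ 2 * (PowerSeries.X * (A * PowerSeries.derivative ℂ B +
        B * PowerSeries.derivative ℂ A) + 2 * PowerSeries.C μ * A * B) * hC
  have hcoeff := congrArg (PowerSeries.coeff (n + 2)) hode
  simp only [map_add (PowerSeries.coeff _), map_sub, PowerSeries.coeff_C_mul,
    PowerSeries.coeff_succ_mul_X, θ, coeff_X_mul_derivative, ← hs] at hcoeff
  push_cast at hcoeff
  linear_combination hcoeff

lemma gegenbauerC_eq_sum_antidiagonal {μ : ℂ} (hμ : ∀ m : ℕ, μ + 1 / 2 ≠ -m) {u v x : ℂ}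
    (huv : u * v = 1) (hx : u + v = 2 * x) (n : ℕ) :
    gegenbauerC n μ x = ∑ p ∈ antidiagonal n,
      poch μ p.1 / p.1.factorial * u ^ p.1 * (poch μ p.2 / p.2.factorial * v ^ p.2) := by
  suffices h : gegenbauerC n μ x =
      PowerSeries.coeff n (negBinomialSeries μ u * negBinomialSeries μ v) by
    simpa only [PowerSeries.coeff_mul, negBinomialSeries, PowerSeries.coeff_mk] using h
  induction n using Nat.twoStepInduction with
  | zero => simp [gegenbauerC_zero, negBinomialSeries, poch_zero]
  | one =>
    rw [gegenbauerC_one (by simpa using hμ 0)]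
    simp [PowerSeries.coeff_mul, negBinomialSeries, Finset.Nat.antidiagonal_succ, poch_succ,
      poch_zero]
    linear_combination -μ * hx
  | more n ih₀ ih₁ =>
    have hn : (n : ℂ) + 2 ≠ 0 := by exact_mod_cast (n + 1).succ_ne_zero
    have hC := gegenbauerC_recurrence hμ x n
    have hseries := coeff_negBinomialSeries_mul_recurrence μ huv (fun _ ↦ rfl) n
    rw [hx] at hseries
    rw [ih₀, ih₁] at hC
    exact mul_left_cancel₀ hn (by linear_combination hC - hseries)

end Gegenbauer

section Positivity

lemma poch_nonneg {a : ℂ} (ha : 0 ≤ a) (k : ℕ) : 0 ≤ poch a k :=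
  Finset.prod_nonneg fun _ _ ↦ by positivity

lemma ne_neg_natCast_of_pos {a : ℂ} (ha : 0 < a) (m : ℕ) : a ≠ -m := by
  have h : 0 < a + m := by positivity
  exact fun h' ↦ h.ne' (by rw [h', neg_add_cancel])

lemma norm_sum_of_nonneg {ι : Type*} {s : Finset ι} {f : ι → ℂ} (hf : ∀ i ∈ s, 0 ≤ f i) :
    ‖∑ i ∈ s, f i‖ = ∑ i ∈ s, ‖f i‖ := by
  apply ofReal_injective
  rw [norm_of_nonneg' (Finset.sum_nonneg hf), ofReal_sum]
  exact Finset.sum_congr rfl fun i hi ↦ (norm_of_nonneg' (hf i hi)).symm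

lemma gegenbauerC_eval_one {μ : ℂ} (hμ : ∀ m : ℕ, μ + 1 / 2 ≠ -m) (n : ℕ) :
    gegenbauerC n μ 1 = ∑ p ∈ antidiagonal n,
      poch μ p.1 / p.1.factorial * (poch μ p.2 / p.2.factorial) := by
  simpa using gegenbauerC_eq_sum_antidiagonal hμ (one_mul 1) (by norm_num : (1 : ℂ) + 1 = 2 * 1) n

lemma gegenbauerC_eval_one_nonneg {μ : ℂ} (hμ : 0 < μ) (n : ℕ) : 0 ≤ gegenbauerC n μ 1 := by
  rw [gegenbauerC_eval_one (ne_neg_natCast_of_pos (by positivity))]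
  have hpoch := poch_nonneg hμ.le
  exact Finset.sum_nonneg fun p _ ↦ mul_nonneg
    (div_nonneg (hpoch _) (by positivity)) (div_nonneg (hpoch _) (by positivity))

lemma norm_gegenbauerC_le_eval_one {μ : ℂ} (hμ : 0 < μ) {t : ℝ} (ht : |t| ≤ 1) (n : ℕ) :
    ‖gegenbauerC n μ t‖ ≤ ‖gegenbauerC n μ 1‖ := by
  have hhalf := ne_neg_natCast_of_pos (show 0 < μ + 1 / 2 by positivity)
  obtain ⟨θ, rfl⟩ : ∃ θ, t = Real.cos θ :=
    ⟨Real.arccos t, (Real.cos_arccos (abs_le.1 ht).1 (abs_le.1 ht).2).symm⟩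
  have hprod : exp (θ * I) * exp (-θ * I) = 1 := by rw [← exp_add]; simp
  have hnorm : ‖exp (-θ * I)‖ = 1 := by simpa using norm_exp_ofReal_mul_I (-θ)
  have hcoeff (k : ℕ) : 0 ≤ poch μ k / k.factorial :=
    div_nonneg (poch_nonneg hμ.le k) (by positivity)
  rw [gegenbauerC_eval_one hhalf, norm_sum_of_nonneg fun p _ ↦ mul_nonneg (hcoeff _) (hcoeff _),
    gegenbauerC_eq_sum_antidiagonal hhalf hprod (by rw [ofReal_cos, two_cos])]
  refine norm_sum_le_of_le _ fun p _ ↦ le_of_eq ?_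
  simp only [norm_mul, norm_pow, norm_exp_ofReal_mul_I, hnorm, one_pow, mul_one]

end Positivity

section Connection

/-- The Gegenbauer polynomials `C_n^μ(x)` continued by `0` to negative degrees `n`, so that the
three-term recurrence holds in every degree. -/
noncomputable def gegenbauerZ (μ x : ℂ) : ℤ → ℂ
  | (n : ℕ) => gegenbauerC n μ x
  | .negSucc _ => 0

lemma gegenbauerZ_natCast (μ x : ℂ) (n : ℕ) : gegenbauerZ μ x n = gegenbauerC n μ x := rfl

lemma gegenbauerZ_zero (μ x : ℂ) : gegenbauerZ μ x 0 = 1 := gegenbauerC_zero μ x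

lemma gegenbauerZ_of_neg (μ x : ℂ) : ∀ {n : ℤ}, n < 0 → gegenbauerZ μ x n = 0
  | .negSucc _, _ => rfl

lemma gegenbauerZ_recurrence {μ : ℂ} (hμ : ∀ m : ℕ, μ + 1 / 2 ≠ -m) (x : ℂ) (n : ℤ) :
    2 * (n + μ) * x * gegenbauerZ μ x n =
      (n + 1) * gegenbauerZ μ x (n + 1) + (n + 2 * μ - 1) * gegenbauerZ μ x (n - 1) := by
  rcases lt_trichotomy n 0 with hn | rfl | hn
  · rw [gegenbauerZ_of_neg μ x hn, gegenbauerZ_of_neg μ x (by lia : n - 1 < 0)]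
    rcases (show n + 1 ≤ 0 by lia).lt_or_eq with hn' | hn'
    · rw [gegenbauerZ_of_neg μ x hn']
      ring
    · obtain rfl : n = -1 := by lia
      simp
  · have hone : gegenbauerZ μ x 1 = 2 * μ * x := gegenbauerC_one (by simpa using hμ 0) x
    rw [gegenbauerZ_of_neg μ x (by lia : (0 : ℤ) - 1 < 0), zero_add, gegenbauerZ_zero, hone]
    push_cast
    ring
  · obtain ⟨m, rfl⟩ : ∃ m : ℕ, n = (m + 1 : ℕ) := ⟨(n - 1).toNat, by lia⟩
    have h := gegenbauerC_recurrence hμ x m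
    rw [show ((m + 1 : ℕ) : ℤ) + 1 = (m + 2 : ℕ) by push_cast; ring,
      show ((m + 1 : ℕ) : ℤ) - 1 = m by push_cast; ring]
    simp only [gegenbauerZ_natCast]
    push_cast
    linear_combination -h

/-- The term `(j, k)` of the connection formula `(2x)^m / m! = ∑ connectionTerm μ x j k`, summed
over `j + k = m`, expressing monomials by Gegenbauer polynomials. It vanishes for `j < k`. -/
noncomputable def connectionTerm (μ x : ℂ) (j k : ℕ) : ℂ :=
  (j - k + μ) / (poch μ (j + 1) * k.factorial) * gegenbauerZ μ x (j - k)

lemma connectionTerm_of_lt (μ x : ℂ) {j k : ℕ} (h : j < k) : connectionTerm μ x j k = 0 := by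
  rw [connectionTerm, gegenbauerZ_of_neg μ x (by lia), mul_zero]

lemma connectionTerm_add_left (μ x : ℂ) (n k : ℕ) :
    connectionTerm μ x (n + k) k =
      (n + μ) / (poch μ (n + k + 1) * k.factorial) * gegenbauerC n μ x := by
  rw [connectionTerm, ← gegenbauerZ_natCast]
  push_cast
  simp only [add_sub_cancel_right]

lemma two_mul_mul_connectionTerm {μ : ℂ} (hμ : ∀ m : ℕ, μ + 1 / 2 ≠ -m) (x : ℂ) (j k : ℕ) :
    2 * x * connectionTerm μ x j k =
      ((j + 1 : ℕ) - k) / (poch μ (j + 1) * k.factorial) * gegenbauerZ μ x ((j + 1 : ℕ) - k) +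
        (j - (k + 1 : ℕ) + 2 * μ) / (poch μ (j + 1) * k.factorial) *
          gegenbauerZ μ x (j - (k + 1 : ℕ)) := by
  have h := gegenbauerZ_recurrence hμ x (j - k)
  rw [show (j : ℤ) - k + 1 = (j + 1 : ℕ) - k by push_cast; ring,
    show (j : ℤ) - k - 1 = j - (k + 1 : ℕ) by push_cast; ring] at h
  rw [connectionTerm]
  push_cast at h ⊢
  linear_combination (1 / (poch μ (j + 1) * k.factorial)) * h

lemma add_mul_connectionTerm {μ : ℂ} (hμ : ∀ m : ℕ, μ ≠ -m) (x : ℂ) (j k : ℕ) :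
    (j + k) * connectionTerm μ x j k =
      (j - k) / (poch μ j * k.factorial) * gegenbauerZ μ x (j - k) +
        k * ((j - k + 2 * μ) / (poch μ (j + 1) * k.factorial) * gegenbauerZ μ x (j - k)) := by
  have hpoch := poch_ne_zero hμ j
  have hfactor : μ + j ≠ 0 := fun h ↦ hμ j (eq_neg_of_add_eq_zero_left h)
  have hk : (k.factorial : ℂ) ≠ 0 := by positivity
  rw [connectionTerm, poch_succ]
  field_simp
  ring

lemma succ_mul_sum_connectionTerm {μ : ℂ} (hμ : ∀ m : ℕ, μ ≠ -m) (hhalf : ∀ m : ℕ, μ + 1 / 2 ≠ -m)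
    (x : ℂ) (m : ℕ) :
    (m + 1) * ∑ p ∈ antidiagonal (m + 1), connectionTerm μ x p.1 p.2 =
      2 * x * ∑ p ∈ antidiagonal m, connectionTerm μ x p.1 p.2 := by
  let lower (p : ℕ × ℕ) : ℂ :=
    (p.1 - p.2) / (poch μ p.1 * p.2.factorial) * gegenbauerZ μ x (p.1 - p.2)
  let upper (p : ℕ × ℕ) : ℂ :=
    p.2 * ((p.1 - p.2 + 2 * μ) / (poch μ (p.1 + 1) * p.2.factorial) * gegenbauerZ μ x (p.1 - p.2))
  have hlower : lower (0, m + 1) = 0 := by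
    simp only [lower, gegenbauerZ_of_neg μ x (by lia : ((0 : ℕ) : ℤ) - (m + 1 : ℕ) < 0), mul_zero]
  have hupper : upper (m + 1, 0) = 0 := by simp only [upper, Nat.cast_zero, zero_mul]
  have hstep (p : ℕ × ℕ) :
      lower (p.1 + 1, p.2) + upper (p.1, p.2 + 1) = 2 * x * connectionTerm μ x p.1 p.2 := by
    have hk : (p.2 : ℂ) + 1 ≠ 0 := by exact_mod_cast p.2.succ_ne_zero
    simp only [lower, upper, two_mul_mul_connectionTerm hhalf, Nat.factorial_succ]
    push_cast
    field_simp
  calc (m + 1) * ∑ p ∈ antidiagonal (m + 1), connectionTerm μ x p.1 p.2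
      = ∑ p ∈ antidiagonal (m + 1), (lower p + upper p) := by
        rw [Finset.mul_sum]
        refine Finset.sum_congr rfl fun p hp ↦ ?_
        rw [← add_mul_connectionTerm hμ, ← Nat.cast_add,
          Finset.HasAntidiagonal.mem_antidiagonal.1 hp, Nat.cast_succ]
    _ = ∑ p ∈ antidiagonal m, (lower (p.1 + 1, p.2) + upper (p.1, p.2 + 1)) := by
        rw [Finset.sum_add_distrib, Finset.sum_add_distrib, Finset.Nat.sum_antidiagonal_succ,
          Finset.Nat.sum_antidiagonal_succ' (f := upper), hlower, hupper, zero_add, zero_add]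
    _ = 2 * x * ∑ p ∈ antidiagonal m, connectionTerm μ x p.1 p.2 := by
        simp only [hstep, Finset.mul_sum]

lemma sum_connectionTerm {μ : ℂ} (hμ : ∀ m : ℕ, μ ≠ -m) (hhalf : ∀ m : ℕ, μ + 1 / 2 ≠ -m) (x : ℂ)
    (m : ℕ) :
    ∑ p ∈ antidiagonal m, connectionTerm μ x p.1 p.2 = (2 * x) ^ m / m.factorial := by
  induction m with
  | zero =>
    have hμ0 : μ ≠ 0 := by simpa using hμ 0
    simp [connectionTerm, poch_succ, poch_zero, hμ0, gegenbauerZ_zero]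
  | succ m ih =>
    have hm : (m : ℂ) + 1 ≠ 0 := by exact_mod_cast m.succ_ne_zero
    refine mul_left_cancel₀ hm ?_
    rw [succ_mul_sum_connectionTerm hμ hhalf, ih, Nat.factorial_succ]
    push_cast
    field_simp
    ring

lemma connectionTerm_one_nonneg {μ : ℂ} (hμ : 0 < μ) (j k : ℕ) : 0 ≤ connectionTerm μ 1 j k := by
  rcases lt_or_ge j k with hjk | hjk
  · rw [connectionTerm_of_lt μ 1 hjk]
  · obtain ⟨n, rfl⟩ := Nat.exists_eq_add_of_le' hjk
    rw [connectionTerm_add_left]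
    exact mul_nonneg (div_nonneg (by positivity)
      (mul_nonneg (poch_nonneg hμ.le _) (by positivity))) (gegenbauerC_eval_one_nonneg hμ n)

lemma norm_connectionTerm_le {μ : ℂ} (hμ : 0 < μ) {t : ℝ} (ht : |t| ≤ 1) (j k : ℕ) :
    ‖connectionTerm μ t j k‖ ≤ ‖connectionTerm μ 1 j k‖ := by
  rcases lt_or_ge j k with hjk | hjk
  · simp only [connectionTerm_of_lt μ _ hjk, le_refl]
  · obtain ⟨n, rfl⟩ := Nat.exists_eq_add_of_le' hjk
    simp only [connectionTerm_add_left, norm_mul]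
    gcongr
    exact norm_gegenbauerC_le_eval_one hμ ht n

lemma sum_norm_connectionTerm_le {μ : ℂ} (hμ : 0 < μ) {t : ℝ} (ht : |t| ≤ 1) (m : ℕ) :
    ∑ p ∈ antidiagonal m, ‖connectionTerm μ t p.1 p.2‖ ≤ 2 ^ m / m.factorial := by
  calc ∑ p ∈ antidiagonal m, ‖connectionTerm μ t p.1 p.2‖
      ≤ ∑ p ∈ antidiagonal m, ‖connectionTerm μ 1 p.1 p.2‖ :=
        Finset.sum_le_sum fun p _ ↦ norm_connectionTerm_le hμ ht p.1 p.2
    _ = ‖∑ p ∈ antidiagonal m, connectionTerm μ 1 p.1 p.2‖ :=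
        (norm_sum_of_nonneg fun p _ ↦ connectionTerm_one_nonneg hμ p.1 p.2).symm
    _ = 2 ^ m / m.factorial := by
        rw [sum_connectionTerm (ne_neg_natCast_of_pos hμ)
          (ne_neg_natCast_of_pos (by positivity))]
        simp

end Connection

section Summation

lemma hasSum_of_hasSum_antidiagonal {E : Type*} [NormedAddCommGroup E] [CompleteSpace E]
    {f : ℕ × ℕ → E} {s : E} (hf : Summable fun m ↦ ∑ p ∈ antidiagonal m, ‖f p‖)
    (hs : HasSum (fun m ↦ ∑ p ∈ antidiagonal m, f p) s) : HasSum f s := by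
  let e := Finset.HasAntidiagonal.sigmaAntidiagonalEquivProd (A := ℕ)
  have hfiber (m : ℕ) : HasSum (fun p : antidiagonal m ↦ f p) (∑ p ∈ antidiagonal m, f p) :=
    Finset.hasSum _ _
  have hsummable : Summable (f ∘ e) := by
    refine Summable.of_norm ((summable_sigma_of_nonneg fun _ ↦ norm_nonneg _).2
      ⟨fun m ↦ Summable.of_finite, hf.congr fun m ↦ ?_⟩)
    rw [tsum_fintype]
    exact (Finset.sum_coe_sort (antidiagonal m) fun p ↦ ‖f p‖).symm
  rw [← e.hasSum_iff]
  exact hs.sigma_of_hasSum hfiber hsummable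

/-- The term `(j, k)` of the double series for `(1 - t / z) ^ (-a)`, obtained from the binomial
series by expanding each power of `t` in Gegenbauer polynomials. -/
noncomputable def binomialGegenbauerTerm (a μ z t : ℂ) (p : ℕ × ℕ) : ℂ :=
  poch a (p.1 + p.2) * (2 * z)⁻¹ ^ (p.1 + p.2) * connectionTerm μ t p.1 p.2

lemma sum_binomialGegenbauerTerm (a z t : ℂ) {μ : ℂ} (hμ : 0 < μ) (m : ℕ) :
    ∑ p ∈ antidiagonal m, binomialGegenbauerTerm a μ z t p =
      poch a m / m.factorial * (t / z) ^ m := by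
  calc ∑ p ∈ antidiagonal m, binomialGegenbauerTerm a μ z t p
      = poch a m * (2 * z)⁻¹ ^ m * ∑ p ∈ antidiagonal m, connectionTerm μ t p.1 p.2 := by
        rw [Finset.mul_sum]
        refine Finset.sum_congr rfl fun p hp ↦ ?_
        rw [binomialGegenbauerTerm, Finset.HasAntidiagonal.mem_antidiagonal.1 hp]
    _ = _ := by
        rw [sum_connectionTerm (ne_neg_natCast_of_pos hμ) (ne_neg_natCast_of_pos (by positivity)),
          show t / z = (2 * z)⁻¹ * (2 * t) by field, mul_pow (2 * z)⁻¹]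
        ring

lemma sum_norm_binomialGegenbauerTerm_le (a z : ℂ) {μ : ℂ} (hμ : 0 < μ) {t : ℝ} (ht : |t| ≤ 1)
    (m : ℕ) :
    ∑ p ∈ antidiagonal m, ‖binomialGegenbauerTerm a μ z t p‖ ≤
      ‖poch a m / m.factorial * z⁻¹ ^ m‖ := by
  calc ∑ p ∈ antidiagonal m, ‖binomialGegenbauerTerm a μ z t p‖
      = ‖poch a m * (2 * z)⁻¹ ^ m‖ * ∑ p ∈ antidiagonal m, ‖connectionTerm μ t p.1 p.2‖ := by
        rw [Finset.mul_sum]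
        refine Finset.sum_congr rfl fun p hp ↦ ?_
        rw [binomialGegenbauerTerm, Finset.HasAntidiagonal.mem_antidiagonal.1 hp, norm_mul]
    _ ≤ ‖poch a m * (2 * z)⁻¹ ^ m‖ * (2 ^ m / m.factorial) := by
        gcongr
        exact sum_norm_connectionTerm_le hμ ht m
    _ = ‖poch a m / m.factorial * z⁻¹ ^ m‖ := by
        rw [show z⁻¹ = (2 * z)⁻¹ * 2 by field, mul_pow _ (2 : ℂ)]
        simp only [norm_mul, norm_div, norm_pow, norm_natCast, norm_ofNat]
        ring

lemma hasSum_binomialGegenbauerTerm (a : ℂ) {μ z : ℂ} (hμ : 0 < μ) (hz : 1 < ‖z‖) {t : ℝ}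
    (ht : |t| ≤ 1) : HasSum (binomialGegenbauerTerm a μ z t) ((1 - t / z) ^ (-a)) := by
  have hz_inv : ‖z⁻¹‖ < 1 := by rw [norm_inv]; exact inv_lt_one_of_one_lt₀ hz
  have htz : ‖t / z‖ < 1 := by
    rw [norm_div, norm_real, div_lt_one (zero_lt_one.trans hz)]
    exact ht.trans_lt hz
  refine hasSum_of_hasSum_antidiagonal ?_ ?_
  · exact Summable.of_nonneg_of_le (fun m ↦ by positivity)
      (sum_norm_binomialGegenbauerTerm_le a z hμ ht)
      (hasSum_one_sub_cpow_neg a hz_inv).summable.norm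
  · simpa only [sum_binomialGegenbauerTerm a z t hμ] using hasSum_one_sub_cpow_neg a htz

lemma hasSum_tsum_binomialGegenbauerTerm (a : ℂ) {μ z : ℂ} (hμ : 0 < μ) (hz : 1 < ‖z‖) {t : ℝ}
    (ht : |t| ≤ 1) :
    HasSum (fun n ↦ ∑' k, binomialGegenbauerTerm a μ z t (n + k, k)) ((1 - t / z) ^ (-a)) := by
  have hinj : Function.Injective fun p : ℕ × ℕ ↦ (p.1 + p.2, p.2) := by
    rintro ⟨n, k⟩ ⟨n', k'⟩ h
    simp only [Prod.mk.injEq] at h ⊢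
    lia
  have hsupport (p : ℕ × ℕ) (hp : p ∉ Set.range fun p : ℕ × ℕ ↦ (p.1 + p.2, p.2)) :
      binomialGegenbauerTerm a μ z t p = 0 := by
    have hlt : p.1 < p.2 := by
      by_contra! hle
      exact hp ⟨(p.1 - p.2, p.2), Prod.ext (Nat.sub_add_cancel hle) rfl⟩
    rw [binomialGegenbauerTerm, connectionTerm_of_lt μ t hlt, mul_zero]
  have h := (hinj.hasSum_iff hsupport).2 (hasSum_binomialGegenbauerTerm a hμ hz ht)
  exact h.prod_fiberwise fun n ↦ (h.summable.prod_factor n).hasSum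

end Summation

section Legendre

/-- The factor of the Legendre function `Q_{n+μ-1/2}^{a-μ-1/2}(z)` that does not depend on `n`. -/
noncomputable def legendreFactor (a μ z : ℂ) : ℂ :=
  Real.sqrt Real.pi * exp (Real.pi * I * (a - μ - 1 / 2)) * Gamma a *
    (z ^ 2 - 1) ^ ((a - μ - 1 / 2) / 2) / (2 ^ (μ + 1 / 2) * Gamma μ * z ^ a)

lemma legendreQ_eq_legendreFactor_mul {a μ z : ℂ} (ha : ∀ m : ℕ, a ≠ -m) (hμ : ∀ m : ℕ, μ ≠ -m)
    (hz : z ≠ 0) (n : ℕ) :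
    legendreQ (n + μ - 1 / 2) (a - μ - 1 / 2) z =
      legendreFactor a μ z * (poch a n * (2 * z)⁻¹ ^ n / poch μ (n + 1)) *
        hyp2F1 ((a + n + 1) / 2) ((a + n) / 2) (μ + (n + 1 : ℕ)) (1 / z ^ 2) := by
  rw [legendreQ, legendreFactor,
    show (n : ℂ) + μ - 1 / 2 + (a - μ - 1 / 2) + 2 = a + n + 1 by ring,
    show (n : ℂ) + μ - 1 / 2 + (a - μ - 1 / 2) + 1 = a + n by ring,
    show (n : ℂ) + μ - 1 / 2 + 3 / 2 = μ + (n + 1 : ℕ) by push_cast; ring,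
    show (n : ℂ) + μ - 1 / 2 + 1 = μ + 1 / 2 + n by ring,
    cpow_add _ _ two_ne_zero, cpow_add _ _ hz, cpow_natCast, cpow_natCast,
    show Gamma (a + n) = poch a n * Gamma a by rw [add_comm, Gamma_natCast_add ha],
    show Gamma (μ + (n + 1 : ℕ)) = poch μ (n + 1) * Gamma μ by rw [add_comm, Gamma_natCast_add hμ],
    inv_pow, mul_pow]
  field

lemma binomialGegenbauerTerm_add_left (a μ z t : ℂ) (n k : ℕ) :
    binomialGegenbauerTerm a μ z t (n + k, k) =
      poch a n * (2 * z)⁻¹ ^ n / poch μ (n + 1) * ((n + μ) * gegenbauerC n μ t) *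
        (poch ((a + n + 1) / 2) k * poch ((a + n) / 2) k /
          (poch (μ + (n + 1 : ℕ)) k * k.factorial) * (1 / z ^ 2) ^ k) := by
  rw [binomialGegenbauerTerm, connectionTerm_add_left, poch_half_mul_poch_half,
    show n + k + k = n + 2 * k by ring, poch_add a, show n + k + 1 = n + 1 + k by ring, poch_add μ,
    pow_add, pow_mul, show (2 * z)⁻¹ ^ 2 = 1 / z ^ 2 / 4 by field, div_pow (1 / z ^ 2)]
  ring

lemma mul_legendreQ_mul_gegenbauerC {a μ z : ℂ} (ha : ∀ m : ℕ, a ≠ -m) (hμ : ∀ m : ℕ, μ ≠ -m)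
    (hz : z ≠ 0) (t : ℂ) (n : ℕ) :
    (n + μ) * legendreQ (n + μ - 1 / 2) (a - μ - 1 / 2) z * gegenbauerC n μ t =
      legendreFactor a μ z * ∑' k, binomialGegenbauerTerm a μ z t (n + k, k) := by
  simp only [binomialGegenbauerTerm_add_left, tsum_mul_left]
  rw [legendreQ_eq_legendreFactor_mul ha hμ hz, hyp2F1]
  ring

theorem hasSum_legendreQ_mul_gegenbauerC {a μ z : ℂ} (ha : ∀ m : ℕ, a ≠ -m) (hμ : 0 < μ)
    (hz : 1 < ‖z‖) {t : ℝ} (ht : |t| ≤ 1) :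
    HasSum (fun n : ℕ ↦
        (n + μ) * legendreQ (n + μ - 1 / 2) (a - μ - 1 / 2) z * gegenbauerC n μ t)
      (legendreFactor a μ z * (1 - t / z) ^ (-a)) := by
  have hz_ne : z ≠ 0 := norm_pos_iff.1 (zero_lt_one.trans hz)
  simpa only [mul_legendreQ_mul_gegenbauerC ha (ne_neg_natCast_of_pos hμ) hz_ne] using
    (hasSum_tsum_binomialGegenbauerTerm a hμ hz ht).mul_left (legendreFactor a μ z)

end Legendre

section Distance

lemma sq_cpow_half {y : ℝ} (hy : 0 < y) (s : ℂ) : ((y : ℂ) ^ 2) ^ (s / 2) = (y : ℂ) ^ s := by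
  rw [sq, mul_cpow_ofReal_nonneg hy.le hy.le, ← cpow_add _ _ (ofReal_ne_zero.2 hy.ne'), add_halves]

lemma cpow_prefactor_mul {P R z w : ℝ} (hP : 0 < P) (hR : 0 < R) (hz : 0 < z) (hw : 0 < w)
    (hzR : z ^ 2 - 1 = (R / (2 * P)) ^ 2) (a μ : ℂ) :
    (R : ℂ) ^ (-(a - μ - 1 / 2)) / (P : ℂ) ^ (μ + 1 / 2) *
        (((z : ℂ) ^ 2 - 1) ^ ((a - μ - 1 / 2) / 2) / (2 ^ (μ + 1 / 2) * (z : ℂ) ^ a)) *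
        ((w : ℂ) / z) ^ (-a) = ((2 * P * w : ℝ) : ℂ) ^ (-a) := by
  have hcpow_ne {y : ℝ} (hy : 0 < y) (s : ℂ) : (y : ℂ) ^ s ≠ 0 := by
    simp [cpow_eq_zero_iff, hy.ne']
  have h2P : 0 < 2 * P := by positivity
  have hbase : ((z : ℂ) ^ 2 - 1) ^ ((a - μ - 1 / 2) / 2) =
      (R : ℂ) ^ (a - μ - 1 / 2) / ((2 * P : ℝ) : ℂ) ^ (a - μ - 1 / 2) := by
    rw [show (z : ℂ) ^ 2 - 1 = ((R / (2 * P) : ℝ) : ℂ) ^ 2 by exact_mod_cast hzR,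
      sq_cpow_half (by positivity), ofReal_div, div_cpow_ofReal_nonneg hR.le h2P.le]
  have hsplit : ((2 * P : ℝ) : ℂ) ^ a =
      ((2 * P : ℝ) : ℂ) ^ (a - μ - 1 / 2) * (2 ^ (μ + 1 / 2) * (P : ℂ) ^ (μ + 1 / 2)) := by
    rw [← ofReal_ofNat, ← mul_cpow_ofReal_nonneg zero_le_two hP.le, ← ofReal_mul,
      ← cpow_add _ _ (ofReal_ne_zero.2 h2P.ne')]
    ring_nf
  rw [hbase, div_cpow_ofReal_nonneg hw.le hz.le, ofReal_mul (2 * P) w,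
    mul_cpow_ofReal_nonneg h2P.le hw.le]
  simp only [cpow_neg]
  rw [hsplit]
  have := hcpow_ne hP (μ + 1 / 2)
  have := hcpow_ne hR (a - μ - 1 / 2)
  have := hcpow_ne hz a
  field

lemma prefactor_mul_legendreFactor {a μ : ℂ} (ha : ∀ m : ℕ, a ≠ -m) (hμ : ∀ m : ℕ, μ ≠ -m)
    {P R z w : ℝ} (hP : 0 < P) (hR : 0 < R) (hz : 0 < z) (hw : 0 < w)
    (hzR : z ^ 2 - 1 = (R / (2 * P)) ^ 2) :
    exp (-(Real.pi * I * (a - μ - 1 / 2))) * Gamma μ / (2 * Real.sqrt Real.pi * Gamma a) *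
        ((R : ℂ) ^ (-(a - μ - 1 / 2)) / (P : ℂ) ^ (μ + 1 / 2)) *
        (2 * (legendreFactor a μ z * ((w : ℂ) / z) ^ (-a))) =
      ((2 * P * w : ℝ) : ℂ) ^ (-a) := by
  have hΓa := Gamma_ne_zero ha
  have hΓμ := Gamma_ne_zero hμ
  have hpi : (Real.sqrt Real.pi : ℂ) ≠ 0 := ofReal_ne_zero.2 (Real.sqrt_pos.2 Real.pi_pos).ne'
  have hexp := exp_ne_zero (Real.pi * I * (a - μ - 1 / 2))
  rw [← cpow_prefactor_mul hP hR hz hw hzR a μ, legendreFactor, exp_neg]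
  field

lemma sq_max_sq_sub_min_sq {R : Type*} [CommRing R] [LinearOrder R] (r r' : R) :
    (max r r' ^ 2 - min r r' ^ 2) ^ 2 = (r ^ 2 - r' ^ 2) ^ 2 := by
  rcases le_total r r' with h | h
  · rw [max_eq_right h, min_eq_left h]
    ring
  · rw [max_eq_left h, min_eq_right h]

lemma max_sq_sub_min_sq_pos {r r' : ℝ} (hr : 0 < r) (hr' : 0 < r') (hne : r ≠ r') :
    0 < max r r' ^ 2 - min r r' ^ 2 :=
  sub_pos.2 (pow_lt_pow_left₀ (min_lt_max.2 hne) (lt_min hr hr').le two_ne_zero)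

lemma one_lt_sq_add_sq_div {r r' : ℝ} (hr : 0 < r) (hr' : 0 < r') (hne : r ≠ r') :
    1 < (r ^ 2 + r' ^ 2) / (2 * r * r') := by
  rw [one_lt_div (by positivity)]
  linarith [sq_pos_of_ne_zero (sub_ne_zero.2 hne), sub_sq r r']

lemma sq_add_sq_div_sq_sub_one {r r' : ℝ} (hr : r ≠ 0) (hr' : r' ≠ 0) :
    ((r ^ 2 + r' ^ 2) / (2 * r * r')) ^ 2 - 1 =
      ((max r r' ^ 2 - min r r' ^ 2) / (2 * (r * r'))) ^ 2 := by
  rw [div_pow _ (2 * (r * r')), sq_max_sq_sub_min_sq]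
  field

theorem hasSum_sq_add_sq_sub_cpow {a μ : ℂ} (ha : ∀ m : ℕ, a ≠ -m) (hμ : 0 < μ) {r r' t : ℝ}
    (hr : 0 < r) (hr' : 0 < r') (hne : r ≠ r') (ht : |t| ≤ 1) :
    HasSum (fun n : ℕ ↦
        exp (-(Real.pi * I * (a - μ - 1 / 2))) * Gamma μ / (2 * Real.sqrt Real.pi * Gamma a) *
          (((max r r' ^ 2 - min r r' ^ 2 : ℝ) : ℂ) ^ (-(a - μ - 1 / 2)) /
            ((r * r' : ℝ) : ℂ) ^ (μ + 1 / 2)) *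
          (2 * ((n + μ) * legendreQ (n + μ - 1 / 2) (a - μ - 1 / 2)
            (((r ^ 2 + r' ^ 2) / (2 * r * r') : ℝ) : ℂ) * gegenbauerC n μ t)))
      (((r ^ 2 + r' ^ 2 - 2 * r * r' * t : ℝ) : ℂ) ^ (-a)) := by
  set z : ℝ := (r ^ 2 + r' ^ 2) / (2 * r * r') with hz_def
  have hz : 1 < z := one_lt_sq_add_sq_div hr hr' hne
  have hz_pos : 0 < z := zero_lt_one.trans hz
  have hz_norm : 1 < ‖(z : ℂ)‖ := by rwa [norm_real, Real.norm_of_nonneg hz_pos.le]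
  have hzt : 0 < z - t := by linarith [(abs_le.1 ht).2]
  have hdistance : r ^ 2 + r' ^ 2 - 2 * r * r' * t = 2 * (r * r') * (z - t) := by
    rw [hz_def]
    field
  have hratio : 1 - (t : ℂ) / z = ((z - t : ℝ) : ℂ) / z := by
    have hz_ne : (z : ℂ) ≠ 0 := ofReal_ne_zero.2 hz_pos.ne'
    push_cast
    field
  have h := hasSum_legendreQ_mul_gegenbauerC ha hμ hz_norm ht
  rw [hratio] at h
  rw [hdistance, ← prefactor_mul_legendreFactor ha (ne_neg_natCast_of_pos hμ) (mul_pos hr hr')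
    (max_sq_sub_min_sq_pos hr hr' hne) hz_pos hzt (sq_add_sq_div_sq_sub_one hr.ne' hr'.ne')]
  exact (h.mul_left 2).mul_left _

lemma norm_sub_cpow_eq {E : Type*} [NormedAddCommGroup E] [InnerProductSpace ℝ E] {x x' : E}
    (hne : x ≠ x') (ν : ℂ) :
    (‖x - x'‖ : ℂ) ^ ν =
      ((‖x‖ ^ 2 + ‖x'‖ ^ 2 - 2 * ‖x‖ * ‖x'‖ * (⟪x, x'⟫ / (‖x‖ * ‖x'‖)) : ℝ) : ℂ) ^ (-(-ν / 2)) := by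
  have hcosines :=
    InnerProductGeometry.norm_sub_sq_eq_norm_sq_add_norm_sq_sub_two_mul_norm_mul_norm_mul_cos_angle
      x x'
  rw [InnerProductGeometry.cos_angle, ← sq, ← sq, ← sq] at hcosines
  rw [← hcosines, ofReal_pow, neg_div, neg_neg, sq_cpow_half (norm_sub_pos_iff.2 hne)]

end Distance

theorem power_law_gegenbauer_expansion_general {E : Type*} [NormedAddCommGroup E]
    [InnerProductSpace ℝ E] {d : ℝ} (hd : 2 < d) {ν : ℂ} (hν : ∀ m : ℕ, -ν / 2 ≠ -(m : ℂ))
    {x x' : E} (hr : 0 < ‖x‖) (hr' : 0 < ‖x'‖) (hne : ‖x‖ ≠ ‖x'‖) :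
    HasSum (fun n : ℕ ↦
        exp (Real.pi * I * (ν + d - 1) / 2) * Gamma ((d - 2) / 2) /
            (2 * (Real.sqrt Real.pi : ℂ) * Gamma (-ν / 2)) *
          ((((max ‖x‖ ‖x'‖) ^ 2 - (min ‖x‖ ‖x'‖) ^ 2 : ℝ) : ℂ) ^ ((ν + d - 1) / 2) /
            ((‖x‖ * ‖x'‖ : ℝ) : ℂ) ^ (((d : ℂ) - 1) / 2)) *
          ((2 * n + d - 2) *
            legendreQ (n + (d - 3) / 2) ((1 - ν - d) / 2)
              (((‖x‖ ^ 2 + ‖x'‖ ^ 2) / (2 * ‖x‖ * ‖x'‖) : ℝ) : ℂ) *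
            gegenbauerC n ((d : ℂ) / 2 - 1) ((⟪x, x'⟫ / (‖x‖ * ‖x'‖) : ℝ) : ℂ)))
      ((‖x - x'‖ : ℂ) ^ ν) := by
  have hμ : 0 < (d : ℂ) / 2 - 1 := by exact_mod_cast (by linarith : (0 : ℝ) < d / 2 - 1)
  have hcos : |⟪x, x'⟫ / (‖x‖ * ‖x'‖)| ≤ 1 := abs_real_inner_div_norm_mul_norm_le_one x x'
  rw [norm_sub_cpow_eq fun h ↦ hne (congrArg norm h)]
  convert hasSum_sq_add_sq_sub_cpow hν hμ hr hr' hne hcos using 3 with n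
  · congr <;> ring
  · rw [← mul_assoc, ← mul_assoc]
    congr <;> ring

/-- Gegenbauer expansion of a power-law fundamental solution of the
polyharmonic equation on `ℝ^d`, `d ≥ 3`. -/
theorem power_law_gegenbauer_expansion
    (d : ℕ) (hd : 3 ≤ d)
    (ν : ℂ) (hν : ∀ m : ℕ, -ν / 2 ≠ -(m : ℂ))
    (x x' : EuclideanSpace ℝ (Fin d))
    (hr : 0 < ‖x‖) (hr' : 0 < ‖x'‖) (hne : ‖x‖ ≠ ‖x'‖) :
    (‖x - x'‖ : ℂ) ^ ν =
      Complex.exp (Real.pi * I * (ν + (d : ℂ) - 1) / 2) * Complex.Gamma (((d : ℂ) - 2) / 2) /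
          (2 * (Real.sqrt Real.pi : ℂ) * Complex.Gamma (-ν / 2)) *
        ((((max ‖x‖ ‖x'‖) ^ 2 - (min ‖x‖ ‖x'‖) ^ 2 : ℝ) : ℂ) ^ ((ν + (d : ℂ) - 1) / 2) /
          ((‖x‖ * ‖x'‖ : ℝ) : ℂ) ^ (((d : ℂ) - 1) / 2)) *
        ∑' n : ℕ,
          (2 * (n : ℂ) + (d : ℂ) - 2) *
            legendreQ ((n : ℂ) + ((d : ℂ) - 3) / 2) ((1 - ν - (d : ℂ)) / 2)
              (((‖x‖ ^ 2 + ‖x'‖ ^ 2) / (2 * ‖x‖ * ‖x'‖) : ℝ) : ℂ) *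
            gegenbauerC n ((d : ℂ) / 2 - 1) ((⟪x, x'⟫ / (‖x‖ * ‖x'‖) : ℝ) : ℂ) := by
  simpa only [ofReal_natCast, tsum_mul_left] using (power_law_gegenbauer_expansion_general (d := d)
    (by exact_mod_cast hd) hν hr hr' hne).tsum_eq.symm
end

section
/- Laplace's expansion on ℝ³: for x, x' ∈ ℝ³ with r := ‖x‖ > 0, r' := ‖x'‖ > 0, r ≠ r', and cos γ := (x, x')/(r r'), one has 1/‖x − x'‖ = Σ_{n=0}^∞ (r_<^n / r_>^{n+1}) P_n(cos γ), where r_< := min{r, r'}, r_> := max{r, r'}, and P_n is the Legendre polynomial of degree n. -/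
open Complex

open scoped RealInnerProductSpace

/-- Real Pochhammer symbol (rising factorial). -/
noncomputable def pochR (a : ℝ) (k : ℕ) : ℝ := ∏ i ∈ Finset.range k, (a + (i : ℝ))

/-- Real Legendre polynomial `P_n(x)`. -/
noncomputable def legendrePR (n : ℕ) (x : ℝ) : ℝ :=
  ∑ j ∈ Finset.range (n + 1),
    pochR (-(n : ℝ)) j * pochR ((n : ℝ) + 1) j / (pochR 1 j * (Nat.factorial j : ℝ)) *
      ((1 - x) / 2) ^ j

/-!
As formal power series,
`∑ Pₙ(1 - 2y) Xⁿ = (1 - X)⁻¹ (1 + 4yX / (1 - X)²)^(-1/2)`, by comparing coefficients, so the square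
of the left-hand side is inverse to `(1 - X)² + 4yX`. For `y = (1 - cos θ) / 2` this quadratic is
`(1 - e^(iθ) X) (1 - e^(-iθ) X)`, and both `(1 - e^(±iθ) X)^(-1/2)` are binomial series converging
on the unit disc. Their Cauchy product gives `∑ Pₙ(cos θ) hⁿ = |1 - e^(iθ) h|⁻¹` for `|h| < 1`. With
`h = r_< / r_>`, the law of cosines identifies `r_> |1 - e^(iθ) h|` with `‖x - x'‖`.
-/

lemma pochR_eq_ascPochhammer_eval (a : ℝ) (k : ℕ) : pochR a k = (ascPochhammer ℝ k).eval a := by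
  induction k with
  | zero => simp [pochR]
  | succ k ih => rw [ascPochhammer_succ_eval, ← ih, pochR, Finset.prod_range_succ, pochR]

lemma pochR_natCast_add_one (n k : ℕ) : pochR (n + 1) k = (n + 1).ascFactorial k := by
  rw [pochR_eq_ascPochhammer_eval, ← ascPochhammer_nat_eq_natCast_ascFactorial, Nat.cast_succ]

lemma pochR_one (k : ℕ) : pochR 1 k = k.factorial := by
  rw [pochR_eq_ascPochhammer_eval, ascPochhammer_eval_one]

lemma pochR_neg_natCast (n k : ℕ) : pochR (-n) k = (-1) ^ k * n.descFactorial k := by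
  rw [pochR_eq_ascPochhammer_eval, ascPochhammer_eval_neg_eq_descPochhammer,
    descPochhammer_eval_eq_descFactorial]

lemma legendrePR_eq_aeval_shiftedLegendre (n : ℕ) (x : ℝ) :
    legendrePR n x = Polynomial.aeval ((1 - x) / 2) (Polynomial.shiftedLegendre n) := by
  simp only [legendrePR, Polynomial.aeval_eq_sum_range, Polynomial.natDegree_shiftedLegendre,
    Polynomial.coeff_shiftedLegendre, zsmul_eq_mul]
  refine Finset.sum_congr rfl fun k _ ↦ ?_
  have hk : (k.factorial : ℝ) ≠ 0 := by positivity
  rw [pochR_neg_natCast, pochR_natCast_add_one, pochR_one, Nat.ascFactorial_eq_factorial_mul_choose,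
    Nat.descFactorial_eq_factorial_mul_choose, Nat.choose_symm_add]
  push_cast
  field_simp

lemma choose_mul_choose_add (n k : ℕ) :
    n.choose k * (n + k).choose n = k.centralBinom * (n + k).choose (2 * k) := by
  have h := Nat.choose_mul (n := n + k) (k := 2 * k) (s := k) (by lia)
  rw [Nat.add_sub_cancel, two_mul, Nat.add_sub_cancel] at h
  rw [Nat.centralBinom, two_mul, Nat.choose_symm_add]
  lia

section FormalSeries

open PowerSeries

lemma succ_mul_choose_succ {R : Type*} [CommRing R] [BinomialRing R] (a : R) (k : ℕ) :
    (k + 1) * Ring.choose a (k + 1) = (a - k) * Ring.choose a k := by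
  have h := Ring.choose_smul_choose a k.le_succ
  rw [Nat.choose_succ_self_right, nsmul_eq_mul, Nat.succ_sub k.le_refl, Nat.sub_self,
    Ring.choose_one_right] at h
  rw [← Nat.cast_succ, h, mul_comm]

lemma subst_eq_sum_add {R : Type*} [CommRing R] (f : R⟦X⟧) {Z : R⟦X⟧} (hZ : HasSubst Z) (n : ℕ) :
    ∃ q : R⟦X⟧, (f.subst Z : R⟦X⟧) = ∑ j ∈ Finset.range n, coeff j f • Z ^ j + Z ^ n * q := by
  refine ⟨(PowerSeries.mk fun i ↦ coeff (i + n) f).subst Z, ?_⟩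
  have htrunc : substAlgHom hZ (trunc n f : R⟦X⟧) = ∑ j ∈ Finset.range n, coeff j f • Z ^ j := by
    simp only [substAlgHom_coe, trunc_apply, Nat.Ico_zero_eq_range, map_sum,
      Polynomial.aeval_monomial, Algebra.smul_def]
  conv_lhs => rw [eq_X_pow_mul_shift_add_trunc n f]
  rw [← coe_substAlgHom hZ, map_add, map_mul, map_pow, substAlgHom_X, htrunc, add_comm]

lemma coeff_mul_subst {R : Type*} [CommRing R] (f g : R⟦X⟧) {Z : R⟦X⟧}
    (hZ : constantCoeff Z = 0) (n : ℕ) :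
    coeff n (g * f.subst Z) = ∑ j ∈ Finset.range (n + 1), coeff j f * coeff n (g * Z ^ j) := by
  obtain ⟨q, hq⟩ := subst_eq_sum_add f (.of_constantCoeff_zero' hZ) (n + 1)
  have hremainder : coeff n (g * (Z ^ (n + 1) * q)) = 0 :=
    X_pow_dvd_iff.1 (((pow_dvd_pow_of_dvd (X_dvd_iff.2 hZ) _).mul_right q).mul_left g)
      n n.lt_succ_self
  rw [hq, mul_add, map_add, hremainder, add_zero, Finset.mul_sum, map_sum]
  simp only [mul_smul_comm, coeff_smul, smul_eq_mul]

lemma constantCoeff_rescale_binomialSeries {R : Type*} [CommRing R] [BinomialRing R] (a w : R) :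
    constantCoeff (rescale w (binomialSeries R a)) = 1 := by
  rw [← coeff_zero_eq_constantCoeff_apply, coeff_rescale]
  simp

lemma eq_of_sq_mul_eq_sq_mul {R : Type*} [CommRing R] [IsDomain R] [CharZero R] {f g D : R⟦X⟧}
    (hD : D ≠ 0) (h : f ^ 2 * D = g ^ 2 * D) (hf : constantCoeff f = 1)
    (hg : constantCoeff g = 1) : f = g := by
  refine (sq_eq_sq_iff_eq_or_eq_neg.1 (mul_right_cancel₀ hD h)).resolve_right ?_
  rintro rfl
  rw [map_neg, hg] at hf
  norm_num at hf

lemma coeff_mk_one_mul_pow {R : Type*} [CommRing R] (a : R) {n k : ℕ} (hk : k ≤ n) :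
    coeff n (PowerSeries.mk 1 * (C a * X * PowerSeries.mk 1 ^ 2) ^ k) =
      a ^ k * (n + k).choose (2 * k) := by
  have h : PowerSeries.mk 1 * (C a * X * PowerSeries.mk 1 ^ 2) ^ k =
      C (a ^ k) * (X ^ k * PowerSeries.mk 1 ^ (2 * k + 1)) := by
    rw [map_pow]; ring
  rw [h, coeff_C_mul, coeff_X_pow_mul', if_pos hk, mk_one_pow_eq_mk_choose_add, coeff_mk,
    show 2 * k + (n - k) = n + k by lia]

/-- The generating function `∑ Pₙ(1 - 2y) Xⁿ` of the Legendre polynomials as a formal power series,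
with `Pₙ(1 - 2y)` encoded as the value at `y` of Mathlib's shifted Legendre polynomial. -/
noncomputable def legendreSeries {R : Type*} [CommRing R] (y : R) : R⟦X⟧ :=
  PowerSeries.mk fun n ↦ Polynomial.aeval y (Polynomial.shiftedLegendre n)

lemma constantCoeff_legendreSeries {R : Type*} [CommRing R] (y : R) :
    constantCoeff (legendreSeries y) = 1 := by
  simp [legendreSeries, Polynomial.shiftedLegendre]

variable {K : Type*} [Field K] [CharZero K]

lemma four_pow_mul_choose_neg_half (k : ℕ) :
    4 ^ k * Ring.choose (-1 / 2 : K) k = (-1) ^ k * k.centralBinom := by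
  induction k with
  | zero => simp
  | succ k ih =>
    have hc : ((k + 1) * (k + 1).centralBinom : K) = 2 * (2 * k + 1) * k.centralBinom := by
      exact_mod_cast k.succ_mul_centralBinom_succ
    refine mul_left_cancel₀ k.cast_add_one_ne_zero ?_
    linear_combination 4 ^ (k + 1) * succ_mul_choose_succ (-1 / 2 : K) k
      - 2 * (2 * k + 1) * ih + (-1) ^ k * hc

lemma binomialSeries_neg_half_sq_mul : binomialSeries K (-1 / 2 : K) ^ 2 * (1 + X) = 1 := by
  have h := binomialSeries_nat (R := K) (A := K) 1
  rw [pow_one] at h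
  rw [pow_two, ← h, ← binomialSeries_add, ← binomialSeries_add]
  norm_num

lemma subst_binomialSeries_neg_half_sq_mul {Z : K⟦X⟧} (hZ : HasSubst Z) :
    (binomialSeries K (-1 / 2 : K)).subst Z ^ 2 * (1 + Z) = 1 := by
  have h := congrArg (substAlgHom hZ) (binomialSeries_neg_half_sq_mul (K := K))
  rwa [map_mul, map_pow, map_add, map_one, substAlgHom_X, coe_substAlgHom] at h

lemma legendreSeries_eq_mul_subst (y : K) :
    legendreSeries y =
      PowerSeries.mk 1 *
        (binomialSeries K (-1 / 2 : K)).subst (C (4 * y) * X * PowerSeries.mk 1 ^ 2 : K⟦X⟧) := by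
  ext n
  rw [coeff_mul_subst _ _ (by simp), legendreSeries, coeff_mk, Polynomial.aeval_eq_sum_range,
    Polynomial.natDegree_shiftedLegendre]
  refine Finset.sum_congr rfl fun k hk ↦ ?_
  have hchoose : (n.choose k * (n + k).choose n : K) = k.centralBinom * (n + k).choose (2 * k) :=
    mod_cast choose_mul_choose_add n k
  rw [coeff_mk_one_mul_pow _ (Finset.mem_range_succ_iff.1 hk), binomialSeries_coeff, smul_eq_mul,
    mul_one, Polynomial.coeff_shiftedLegendre, zsmul_eq_mul]
  push_cast
  rw [mul_pow]
  linear_combination (-1) ^ k * y ^ k * hchoose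
    - y ^ k * (n + k).choose (2 * k) * four_pow_mul_choose_neg_half (K := K) k

lemma legendreSeries_sq_mul (y : K) :
    legendreSeries y ^ 2 * ((1 - X) ^ 2 + C (4 * y) * X) = 1 := by
  have hgeom : (PowerSeries.mk 1 : K⟦X⟧) * (1 - X) = 1 := mk_one_mul_one_sub_eq_one K
  set Z : K⟦X⟧ := C (4 * y) * X * PowerSeries.mk 1 ^ 2 with hZ
  have hsubst := subst_binomialSeries_neg_half_sq_mul
    (HasSubst.of_constantCoeff_zero' (a := Z) (by simp [hZ]))
  have hquad : PowerSeries.mk 1 ^ 2 * ((1 - X) ^ 2 + C (4 * y) * X) = 1 + Z := by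
    linear_combination (PowerSeries.mk 1 * (1 - X) + 1) * hgeom - hZ
  rw [legendreSeries_eq_mul_subst, ← hZ, mul_pow, mul_right_comm, hquad, mul_comm, hsubst]

lemma legendreSeries_eq_rescale_mul_rescale {y u v : K} (huv : u * v = 1) (hy : 4 * y = u + v + 2) :
    legendreSeries y =
      rescale u (binomialSeries K (-1 / 2 : K)) * rescale v (binomialSeries K (-1 / 2 : K)) := by
  have hrescale (w : K) : rescale w (binomialSeries K (-1 / 2 : K)) ^ 2 * (1 + C w * X) = 1 := by
    have h := congrArg (rescale w) (binomialSeries_neg_half_sq_mul (K := K))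
    rwa [map_mul, map_pow, map_add, map_one, rescale_X] at h
  have hfactor : (1 - X) ^ 2 + C (4 * y) * X = (1 + C u * X) * (1 + C v * X) := by
    have huv' : (C u * C v : K⟦X⟧) = 1 := by rw [← map_mul, huv, map_one]
    rw [hy, map_add, map_add, map_ofNat]
    linear_combination -X ^ 2 * huv'
  have hlegendre := legendreSeries_sq_mul y
  refine eq_of_sq_mul_eq_sq_mul (right_ne_zero_of_mul_eq_one hlegendre) ?_ ?_ ?_
  · rw [hlegendre, hfactor, mul_pow, mul_mul_mul_comm, hrescale, hrescale, one_mul]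
  · exact constantCoeff_legendreSeries y
  · simp only [map_mul, constantCoeff_rescale_binomialSeries, one_mul]

end FormalSeries

section Convergence

open PowerSeries ComplexConjugate

lemma hasSum_coeff_mul_mul_pow {R : Type*} [NormedCommRing R] [CompleteSpace R]
    {f g : R⟦X⟧} {z : R} (hf : Summable fun n ↦ ‖coeff n f * z ^ n‖)
    (hg : Summable fun n ↦ ‖coeff n g * z ^ n‖) :
    HasSum (fun n ↦ coeff n (f * g) * z ^ n)
      ((∑' n, coeff n f * z ^ n) * ∑' n, coeff n g * z ^ n) := by
  have hcauchy (n : ℕ) : coeff n (f * g) * z ^ n =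
      ∑ kl ∈ Finset.HasAntidiagonal.antidiagonal n,
        coeff kl.1 f * z ^ kl.1 * (coeff kl.2 g * z ^ kl.2) := by
    rw [coeff_mul, Finset.sum_mul]
    refine Finset.sum_congr rfl fun kl hkl ↦ ?_
    rw [← Finset.HasAntidiagonal.mem_antidiagonal.1 hkl, pow_add, mul_mul_mul_comm]
  rw [tsum_mul_tsum_eq_tsum_sum_antidiagonal_of_summable_norm hf hg, funext hcauchy]
  exact (summable_norm_sum_mul_antidiagonal_of_summable_norm hf hg).of_norm.hasSum

lemma binomialSeries_apply_const (a z : ℂ) (n : ℕ) :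
    _root_.binomialSeries ℂ a n (fun _ ↦ z) =
      coeff n (PowerSeries.binomialSeries ℂ a) * z ^ n := by
  rw [_root_.binomialSeries_apply, List.ofFn_const, List.prod_replicate,
    PowerSeries.binomialSeries_coeff, smul_eq_mul, smul_eq_mul, mul_one]

lemma mem_eball_zero_one {E : Type*} [SeminormedAddCommGroup E] {z : E} (hz : ‖z‖ < 1) :
    z ∈ Metric.eball 0 1 := by
  rw [← ENNReal.ofReal_one, Metric.eball_ofReal]
  exact mem_ball_zero_iff.2 hz

lemma summable_norm_coeff_binomialSeries (a : ℂ) {z : ℂ} (hz : ‖z‖ < 1) :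
    Summable fun n ↦ ‖coeff n (PowerSeries.binomialSeries ℂ a) * z ^ n‖ := by
  simp only [← binomialSeries_apply_const]
  exact FormalMultilinearSeries.summable_norm_apply _
    (Metric.eball_subset_eball one_add_cpow_hasFPowerSeriesOnBall_zero.r_le (mem_eball_zero_one hz))

lemma hasSum_coeff_binomialSeries (a : ℂ) {z : ℂ} (hz : ‖z‖ < 1) :
    HasSum (fun n ↦ coeff n (PowerSeries.binomialSeries ℂ a) * z ^ n) ((1 + z) ^ a) := by
  simp only [← binomialSeries_apply_const]
  simpa only [zero_add] using
    one_add_cpow_hasFPowerSeriesOnBall_zero.hasSum (mem_eball_zero_one hz)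

lemma cpow_mul_conj_cpow {z : ℂ} (hz : z ∈ slitPlane) (a : ℝ) :
    z ^ (a : ℂ) * conj z ^ (a : ℂ) = ((‖z‖ ^ (2 * a) : ℝ) : ℂ) := by
  rw [conj_cpow _ _ (slitPlane_arg_ne_pi hz), conj_ofReal, mul_conj, normSq_eq_norm_sq,
    norm_cpow_real, ← Real.rpow_mul_natCast (norm_nonneg z), Nat.cast_two, mul_comm 2 a]

lemma coeff_legendreSeries_ofReal (c : ℝ) (n : ℕ) :
    coeff n (legendreSeries ((1 - c : ℂ) / 2)) = legendrePR n c := by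
  rw [legendreSeries, coeff_mk, legendrePR_eq_aeval_shiftedLegendre]
  have := Polynomial.aeval_algebraMap_apply ℂ ((1 - c) / 2) (Polynomial.shiftedLegendre n)
  simpa using this

lemma legendreSeries_eq_rescale_mul_rescale_conj {u : ℂ} (hu : ‖u‖ = 1) :
    legendreSeries ((1 - u.re : ℂ) / 2) =
      rescale (-u) (PowerSeries.binomialSeries ℂ (-1 / 2 : ℂ)) *
        rescale (conj (-u)) (PowerSeries.binomialSeries ℂ (-1 / 2 : ℂ)) := by
  apply legendreSeries_eq_rescale_mul_rescale
  · rw [mul_conj, normSq_eq_norm_sq, norm_neg, hu, one_pow, ofReal_one]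
  · rw [add_conj, neg_re, ofReal_mul, ofReal_neg, ofReal_ofNat]
    ring

lemma hasSum_rescale_mul_rescale_binomialSeries (a : ℂ) {u v z : ℂ}
    (hu : ‖u * z‖ < 1) (hv : ‖v * z‖ < 1) :
    HasSum
      (fun n ↦ coeff n (rescale u (PowerSeries.binomialSeries ℂ a) *
        rescale v (PowerSeries.binomialSeries ℂ a)) * z ^ n)
      ((1 + u * z) ^ a * (1 + v * z) ^ a) := by
  have hcoeff (w : ℂ) (n : ℕ) : coeff n (rescale w (PowerSeries.binomialSeries ℂ a)) * z ^ n =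
      coeff n (PowerSeries.binomialSeries ℂ a) * (w * z) ^ n := by
    rw [coeff_rescale, mul_pow]; ring
  rw [← (hasSum_coeff_binomialSeries a hu).tsum_eq, ← (hasSum_coeff_binomialSeries a hv).tsum_eq]
  simp only [← hcoeff]
  apply hasSum_coeff_mul_mul_pow
  · simpa only [hcoeff] using summable_norm_coeff_binomialSeries a hu
  · simpa only [hcoeff] using summable_norm_coeff_binomialSeries a hv

lemma hasSum_legendrePR_re_mul_pow {u : ℂ} (hu : ‖u‖ = 1) {h : ℝ} (hh : |h| < 1) :
    HasSum (fun n ↦ legendrePR n u.re * h ^ n) ‖1 - u * h‖⁻¹ := by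
  have hnorm : ‖-u * h‖ < 1 := by simpa [hu] using hh
  have hnorm' : ‖conj (-u) * h‖ < 1 := by simpa [hu] using hh
  have hvalue : (1 + -u * h) ^ (-1 / 2 : ℂ) * (1 + conj (-u) * h) ^ (-1 / 2 : ℂ) =
      (‖1 - u * h‖⁻¹ : ℝ) := by
    have hpow := cpow_mul_conj_cpow (mem_slitPlane_of_norm_lt_one hnorm) (-1 / 2)
    rw [map_add, map_one, map_mul, conj_ofReal, neg_mul u, ← sub_eq_add_neg,
      show (2 * (-1 / 2) : ℝ) = -1 by norm_num, Real.rpow_neg_one] at hpow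
    rw [neg_mul u, ← sub_eq_add_neg, ← hpow]
    norm_num
  have hsum := hasSum_rescale_mul_rescale_binomialSeries (-1 / 2) hnorm hnorm'
  rw [← legendreSeries_eq_rescale_mul_rescale_conj hu, hvalue] at hsum
  simp only [coeff_legendreSeries_ofReal] at hsum
  exact_mod_cast hsum

end Convergence

lemma hasSum_legendrePR_cos_mul_pow (θ : ℝ) {h : ℝ} (hh : |h| < 1) :
    HasSum (fun n ↦ legendrePR n (Real.cos θ) * h ^ n) (√(1 - 2 * h * Real.cos θ + h ^ 2))⁻¹ := by
  have hsum := hasSum_legendrePR_re_mul_pow (norm_exp_ofReal_mul_I θ) hh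
  have hnorm : ‖1 - exp (θ * I) * h‖ = √(1 - 2 * h * Real.cos θ + h ^ 2) := by
    rw [norm_def, normSq_apply, sub_re, sub_im, re_mul_ofReal, im_mul_ofReal,
      exp_ofReal_mul_I_re, exp_ofReal_mul_I_im, one_re, one_im]
    congr 1
    linear_combination h ^ 2 * Real.sin_sq_add_cos_sq θ
  rwa [exp_ofReal_mul_I_re, hnorm] at hsum

section InnerProductSpace

open InnerProductGeometry

variable {V : Type*} [NormedAddCommGroup V] [InnerProductSpace ℝ V]

lemma norm_sub_eq_norm_mul_sqrt (x : V) {y : V} (hy : y ≠ 0) :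
    ‖x - y‖ = ‖y‖ * √(1 - 2 * (‖x‖ / ‖y‖) * Real.cos (angle x y) + (‖x‖ / ‖y‖) ^ 2) := by
  have hy' : ‖y‖ ≠ 0 := norm_ne_zero_iff.2 hy
  have hcos := norm_sub_sq_eq_norm_sq_add_norm_sq_sub_two_mul_norm_mul_norm_mul_cos_angle x y
  rw [← Real.sqrt_sq (norm_nonneg (x - y)), ← Real.sqrt_sq (norm_nonneg y),
    ← Real.sqrt_mul (sq_nonneg _), Real.sqrt_sq (norm_nonneg y)]
  congr 1
  field_simp
  linarith

lemma hasSum_inv_norm_sub_of_norm_lt {x y : V} (hxy : ‖x‖ < ‖y‖) :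
    HasSum (fun n ↦ ‖x‖ ^ n / ‖y‖ ^ (n + 1) * legendrePR n (Real.cos (angle x y))) ‖x - y‖⁻¹ := by
  have hy : 0 < ‖y‖ := (norm_nonneg x).trans_lt hxy
  have hratio : |‖x‖ / ‖y‖| < 1 := by
    rwa [abs_of_nonneg (by positivity), div_lt_one hy]
  have hsum := (hasSum_legendrePR_cos_mul_pow (angle x y) hratio).mul_left ‖y‖⁻¹
  rw [← mul_inv, ← norm_sub_eq_norm_mul_sqrt x (norm_pos_iff.1 hy)] at hsum
  refine hsum.congr_fun fun n ↦ ?_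
  rw [div_pow, pow_succ]
  field_simp

theorem laplace_expansion_R3_general {x x' : V} (hne : ‖x‖ ≠ ‖x'‖) :
    HasSum (fun n : ℕ ↦ min ‖x‖ ‖x'‖ ^ n / max ‖x‖ ‖x'‖ ^ (n + 1) *
      legendrePR n (Real.cos (angle x x'))) ‖x - x'‖⁻¹ := by
  wlog hlt : ‖x‖ < ‖x'‖ generalizing x x'
  · rw [min_comm, max_comm, angle_comm, norm_sub_rev]
    exact this hne.symm (hne.lt_of_le' (not_lt.1 hlt))
  rw [min_eq_left hlt.le, max_eq_right hlt.le]
  exact hasSum_inv_norm_sub_of_norm_lt hlt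

end InnerProductSpace

/-- Laplace's expansion on `ℝ³`. -/
theorem laplace_expansion_R3
    (x x' : EuclideanSpace ℝ (Fin 3))
    (hr : 0 < ‖x‖) (hr' : 0 < ‖x'‖) (hne : ‖x‖ ≠ ‖x'‖) :
    1 / ‖x - x'‖ =
      ∑' n : ℕ,
        (min ‖x‖ ‖x'‖) ^ n / (max ‖x‖ ‖x'‖) ^ (n + 1) *
          legendrePR n (⟪x, x'⟫ / (‖x‖ * ‖x'‖)) := by
  rw [← InnerProductGeometry.cos_angle, one_div]
  exact (laplace_expansion_R3_general hne).tsum_eq.symm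
end
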